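/- For every integer k ≥ 2 there exists a constant C₁ = C₁(k) > 0 such that: for every K of the form K = 2^m with K ≥ 2^{10k} there exists a constant C₂ = C₂(k, K) < ∞ such that for every δ ∈ (0, 1], |L_δ| ≤ K^{1 + k(k+1)(k+2)/6} · |L_{δK/C₁}| + C₂ · (log₊ δ)^{k−1} · δ^{−k(k+1)(k+2)/6 − 2}. -/

import Mathlib

open MeasureTheory Real Set
open scoped ENNReal

noncomputable section

/-- Index set for multi-indices `β = (β₁, β₂) ∈ ℕ²` with `1 ≤ β₁ + β₂ ≤ k`;
its cardinality is `N = (k+1)(k+2)/2 − 1`. -/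
def Idx (k : ℕ) : Type :=
  {β : Fin (k + 1) × Fin (k + 1) // 1 ≤ (β.1 : ℕ) + (β.2 : ℕ) ∧ (β.1 : ℕ) + (β.2 : ℕ) ≤ k}

instance (k : ℕ) : Fintype (Idx k) := by unfold Idx; infer_instance

/-- The phase polynomial `P(ξ; x) = ∑_{1 ≤ |β| ≤ k} x_β ξ₁^{β₁} ξ₂^{β₂}`. -/
def Pphase (k : ℕ) (x : Idx k → ℝ) (ξ : Fin 2 → ℝ) : ℝ :=
  ∑ β : Idx k, x β * ξ 0 ^ (β.1.1 : ℕ) * ξ 1 ^ (β.1.2 : ℕ)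

/-- `E_k1(x) = ∫_{[0,1]²} e(P(ξ; x)) dξ` with `e(t) = exp(2πit)`. -/
def Eone (k : ℕ) (x : Idx k → ℝ) : ℂ :=
  ∫ ξ in Icc (0 : Fin 2 → ℝ) 1, Complex.exp (2 * Real.pi * Complex.I * (Pphase k x ξ))

/-- `L_δ = {x ∈ ℝ^N : sup_{μ∈ℝ} |{ξ ∈ [0,1]² : μ ≤ P(ξ; x) ≤ μ + 1}| > δ}`. -/
def Lset (k : ℕ) (δ : ℝ) : Set (Idx k → ℝ) :=
  {x | ENNReal.ofReal δ <
    ⨆ μ : ℝ, volume {ξ ∈ Icc (0 : Fin 2 → ℝ) 1 |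
      μ ≤ Pphase k x ξ ∧ Pphase k x ξ ≤ μ + 1}}

theorem volume_fin_le_prod {n : ℕ} (X : Set (Fin n → ℝ)) (hX : MeasurableSet X)
    (w : Fin n → ℝ)
    (h : ∀ i, ∀ x ∈ X, ∀ y ∈ X, (∀ j < i, x j = y j) → |x i - y i| ≤ w i) :
    volume X ≤ ∏ i, ENNReal.ofReal (w i) := by
  induction n with
  | zero =>
    calc volume X ≤ volume (univ : Set (Fin 0 → ℝ)) := measure_mono (subset_univ _)
      _ ≤ _ := by simp [volume_pi]
  | succ n ih =>
    have hmp := (volume_preserving_piFinSuccAbove (fun _ : Fin (n + 1) => ℝ) 0).symm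
    rw [← hmp.measure_preimage hX.nullMeasurableSet, Measure.volume_eq_prod,
      Measure.prod_apply (hmp.measurable hX), Fin.prod_univ_succ]
    set e := (MeasurableEquiv.piFinSuccAbove (fun _ : Fin (n + 1) => ℝ) 0).symm with he
    have hev : ∀ s y, e (s, y) = Fin.cons s y := fun s y => by
      simp [he, MeasurableEquiv.piFinSuccAbove, Fin.insertNthEquiv]
    let S : Set ℝ := (fun x : Fin (n + 1) → ℝ => x 0) '' X
    have hS : volume (closure S) ≤ ENNReal.ofReal (w 0) := by
      refine (Real.volume_le_diam _).trans ?_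
      rw [Metric.ediam_closure]
      refine Metric.ediam_le ?_
      rintro _ ⟨x, hx, rfl⟩ _ ⟨y, hy, rfl⟩
      rw [edist_dist, Real.dist_eq]
      exact ENNReal.ofReal_le_ofReal (h 0 x hx y hy (fun j hj => absurd hj (Fin.not_lt_zero j)))
    calc ∫⁻ s, volume (Prod.mk s ⁻¹' (e ⁻¹' X))
        ≤ ∫⁻ s, (closure S).indicator (fun _ => ∏ i : Fin n, ENNReal.ofReal (w i.succ)) s := by
          refine lintegral_mono fun s => ?_
          by_cases hs : s ∈ closure S
          · rw [indicator_of_mem hs]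
            refine ih _ (measurable_prodMk_left (hmp.measurable hX)) _ ?_
            intro i x hx y hy hxy
            have := h i.succ (e (s, x)) hx (e (s, y)) hy ?_
            · simpa [hev] using this
            · intro j hj
              rw [hev, hev]
              cases j using Fin.cases with
              | zero => rfl
              | succ j => simpa using hxy j (Fin.succ_lt_succ_iff.1 hj)
          · rw [indicator_of_notMem hs]
            have : Prod.mk s ⁻¹' (e ⁻¹' X) = ∅ := by
              ext y
              simp only [mem_preimage, mem_empty_iff_false, iff_false]
              intro hy
              exact hs (subset_closure ⟨_, hy, by rw [hev]; rfl⟩)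
            simp [this]
      _ = (∏ i : Fin n, ENNReal.ofReal (w i.succ)) * volume (closure S) := by
          rw [lintegral_indicator isClosed_closure.measurableSet, setLIntegral_const]
      _ ≤ _ := by rw [mul_comm]; gcongr

theorem volume_le_prod_of_rank {ι : Type*} [Fintype ι] (r : ι → ℕ) (hr : Function.Injective r)
    (X : Set (ι → ℝ)) (hX : MeasurableSet X) (w : ι → ℝ)
    (h : ∀ i, ∀ x ∈ X, ∀ y ∈ X, (∀ j, r j < r i → x j = y j) → |x i - y i| ≤ w i) :
    volume X ≤ ∏ i, ENNReal.ofReal (w i) := by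
  let _ : LinearOrder ι := LinearOrder.lift' r hr
  let e : Fin (Fintype.card ι) ≃o ι := Fintype.orderIsoFinOfCardEq ι rfl
  have hmp := volume_measurePreserving_piCongrLeft (fun _ : ι => ℝ) e.toEquiv
  rw [← hmp.measure_preimage hX.nullMeasurableSet, ← e.toEquiv.prod_comp]
  refine volume_fin_le_prod _ (hmp.measurable hX) _ ?_
  intro i x hx y hy hxy
  have hev : ∀ (x : Fin (Fintype.card ι) → ℝ) (j : Fin (Fintype.card ι)),
      MeasurableEquiv.piCongrLeft (fun _ : ι => ℝ) e.toEquiv x (e j) = x j := fun x j =>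
    Equiv.piCongrLeft_apply_apply (fun _ : ι => ℝ) e.toEquiv x j
  have := h (e i) _ hx _ hy ?_
  · rw [hev, hev] at this
    exact this
  · intro j hj
    obtain ⟨j, rfl⟩ := e.surjective j
    rw [hev, hev]
    exact hxy j (e.lt_iff_lt.1 hj)

theorem lintegral_pi_prod_le {α : Type*} [MeasurableSpace α] [Inhabited α] (ν : Measure α)
    [SigmaFinite ν] {n : ℕ} (h : Fin n → (Fin n → α) → ℝ≥0∞) (hm : ∀ i, Measurable (h i))
    (hdep : ∀ i p q, (∀ m ≤ i, p m = q m) → h i p = h i q) (M : Fin n → ℝ≥0∞)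
    (hM : ∀ i p, ∫⁻ s, h i (Function.update p i s) ∂ν ≤ M i) :
    ∫⁻ p, ∏ i, h i p ∂(Measure.pi fun _ => ν) ≤ ∏ i, M i := by
  induction n with
  | zero => simp
  | succ n ih =>
    have hmp := (measurePreserving_piFinSuccAbove (fun _ : Fin (n + 1) => ν) (Fin.last n)).symm
    set e := (MeasurableEquiv.piFinSuccAbove (fun _ : Fin (n + 1) => α) (Fin.last n)).symm with he
    have hev : ∀ s y, e (s, y) = Fin.snoc (α := fun _ => α) y s := fun s y => by
      simp [he, MeasurableEquiv.piFinSuccAbove, Fin.insertNthEquiv]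
    have hmeas : Measurable fun p => ∏ i, h i p := Finset.measurable_prod _ fun i _ => hm i
    rw [← hmp.lintegral_comp hmeas, lintegral_prod_symm' (fun z => ∏ i, h i (e z))
      (hmeas.comp hmp.measurable)]
    have hsn : Measurable fun q : Fin n → α => e (default, q) :=
      hmp.measurable.comp measurable_prodMk_left
    calc _ ≤ ∫⁻ q : Fin n → α, (∏ i : Fin n, h i.castSucc (e (default, q))) * M (Fin.last n)
            ∂(Measure.pi fun _ => ν) := by
          refine lintegral_mono fun q => ?_
          calc _ = ∫⁻ s, (∏ i : Fin n, h i.castSucc (e (default, q))) *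
                h (Fin.last n) (e (s, q)) ∂ν := by
                refine lintegral_congr fun s => ?_
                rw [Fin.prod_univ_castSucc]
                congr 1
                refine Finset.prod_congr rfl fun i _ => hdep _ _ _ fun m hm => ?_
                rw [hev, hev]
                obtain ⟨m', rfl⟩ : ∃ m' : Fin n, m = m'.castSucc :=
                  ⟨⟨m, lt_of_le_of_lt hm i.2⟩, rfl⟩
                simp
            _ = (∏ i : Fin n, h i.castSucc (e (default, q))) *
                ∫⁻ s, h (Fin.last n) (e (s, q)) ∂ν :=
                lintegral_const_mul _ ((hm _).comp (hmp.measurable.comp measurable_prodMk_right))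
            _ ≤ _ := by
                gcongr
                refine le_trans (le_of_eq ?_) (hM (Fin.last n) (e (default, q)))
                refine lintegral_congr fun s => ?_
                rw [hev, hev, Fin.update_snoc_last]
      _ = (∫⁻ q : Fin n → α, (∏ i : Fin n, h i.castSucc (e (default, q)))
            ∂(Measure.pi fun _ => ν)) * M (Fin.last n) :=
          lintegral_mul_const _ (Finset.measurable_prod _ fun i _ => (hm _).comp hsn)
      _ ≤ (∏ i : Fin n, M i.castSucc) * M (Fin.last n) := by
          gcongr
          refine ih (fun i q => h i.castSucc (e (default, q))) (fun i => (hm _).comp hsn) ?_ _ ?_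
          · intro i p q hpq
            refine hdep _ _ _ fun m hm => ?_
            obtain ⟨m', rfl⟩ : ∃ m' : Fin n, m = m'.castSucc :=
              ⟨⟨m, lt_of_le_of_lt hm i.2⟩, rfl⟩
            rw [hev, hev]
            simpa using hpq m' hm
          · intro i p
            refine le_trans (le_of_eq ?_) (hM i.castSucc (e (default, p)))
            refine lintegral_congr fun s => ?_
            simp only [hev, Fin.snoc_update]
      _ = _ := (Fin.prod_univ_castSucc _).symm

theorem volume_eval_mem_Icc_and_lt_abs_derivative_le (g : Polynomial ℝ) {n : ℕ}
    (hn : g.natDegree ≤ n) {u v B : ℝ} (hB : 0 < B) :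
    volume {t | g.eval t ∈ Icc u v ∧ B < |g.derivative.eval t|} ≤
      ENNReal.ofReal (n * (v - u) / B) := by
  by_cases hd : g.natDegree = 0
  · have : g.derivative = 0 := Polynomial.derivative_of_natDegree_zero hd
    simp [this, hB.not_gt]
  have hd0 : g.derivative ≠ 0 := fun h => hd (Polynomial.derivative_eq_zero.1 h)
  classical
  set R := g.derivative.roots.toFinset with hR
  have hRc : R.card + 1 ≤ n := by
    have h1 := (Multiset.toFinset_card_le g.derivative.roots).trans
      (Polynomial.card_roots' g.derivative)
    have h2 := Polynomial.natDegree_derivative_lt hd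
    rw [← hR] at h1
    omega
  let N : ℝ → ℕ := fun t => ∑ r ∈ R, if r < t then 1 else 0
  have hN : Measurable N := Finset.measurable_sum _ fun r _ =>
    Measurable.ite measurableSet_Ioi measurable_const measurable_const
  have hNle : ∀ t, N t ≤ R.card := fun t => by
    refine (Finset.sum_le_card_nsmul R _ 1 fun r _ => ?_).trans (by simp)
    split_ifs <;> simp
  let W : ℕ → Set ℝ := fun i => {t | (g.eval t ∈ Icc u v ∧ B < |g.derivative.eval t|) ∧ N t = i}
  have hW : ∀ i, volume (W i) ≤ ENNReal.ofReal ((v - u) / B) := fun i => by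
    have hWm : MeasurableSet (W i) := by
      refine MeasurableSet.inter (MeasurableSet.inter ?_ ?_) ?_
      · exact g.continuous.measurable measurableSet_Icc
      · exact measurableSet_lt measurable_const g.derivative.continuous.abs.measurable
      · exact hN (measurableSet_singleton i)
    have hinj : InjOn (fun t => g.eval t) (W i) := by
      have key : ∀ s ∈ W i, ∀ t ∈ W i, s < t → g.eval s ≠ g.eval t := by
        intro s hs t ht hst hgst
        obtain ⟨r, hr, hr0⟩ := exists_deriv_eq_zero hst g.continuous.continuousOn hgst
        rw [Polynomial.deriv] at hr0
        have hrR : r ∈ R := by simp [hR, hd0, hr0]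
        have : N s < N t := by
          refine Finset.sum_lt_sum (fun x _ => ?_) ⟨r, hrR, ?_⟩
          · split_ifs with h1 h2 <;> first | omega | exact absurd (h1.trans hst) h2
          · simp [hr.2, hr.1.le]
        rw [hs.2, ht.2] at this
        exact lt_irrefl _ this
      intro s hs t ht hst
      by_contra hne
      rcases lt_or_gt_of_ne hne with h | h
      · exact key s hs t ht h hst
      · exact key t ht s hs h hst.symm
    have hcov := lintegral_image_eq_lintegral_abs_deriv_mul hWm
      (fun x _ => (g.hasDerivAt x).hasDerivWithinAt) hinj (fun _ => 1)
    simp only [mul_one, lintegral_const, Measure.restrict_apply_univ, one_mul] at hcov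
    have h1 : ENNReal.ofReal B * volume (W i) ≤ ENNReal.ofReal (v - u) :=
      calc ENNReal.ofReal B * volume (W i)
          ≤ ∫⁻ x in W i, ENNReal.ofReal |g.derivative.eval x| := by
            rw [← setLIntegral_const]
            exact setLIntegral_mono' hWm fun x hx => ENNReal.ofReal_le_ofReal hx.1.2.le
        _ = volume ((fun t => g.eval t) '' W i) := hcov.symm
        _ ≤ volume (Icc u v) := measure_mono (by rintro _ ⟨t, ht, rfl⟩; exact ht.1.1)
        _ = _ := Real.volume_Icc
    rw [ENNReal.ofReal_div_of_pos hB, ENNReal.le_div_iff_mul_le, mul_comm]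
    · exact h1
    · left; simpa using hB
    · left; simp
  have hsub : {t | g.eval t ∈ Icc u v ∧ B < |g.derivative.eval t|} ⊆
      ⋃ i ∈ Finset.range n, W i := by
    intro t ht
    simp only [mem_iUnion, Finset.mem_range]
    exact ⟨N t, by have := hNle t; omega, ht, rfl⟩
  calc _ ≤ _ := measure_mono hsub
    _ ≤ ∑ i ∈ Finset.range n, volume (W i) := measure_biUnion_finset_le _ _
    _ ≤ ∑ i ∈ Finset.range n, ENNReal.ofReal ((v - u) / B) := Finset.sum_le_sum fun i _ => hW i
    _ = _ := by
      rw [Finset.sum_const, Finset.card_range, nsmul_eq_mul, mul_div_assoc,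
        ENNReal.ofReal_mul (Nat.cast_nonneg n), ENNReal.ofReal_natCast]

theorem volume_exists_lt_abs_hasseDeriv_le (p : Polynomial ℝ) {k : ℕ} (hk : 1 ≤ k)
    (hp : p.natDegree ≤ k) (μ : ℝ) {η : ℝ} (hη : 0 < η) :
    volume {t | p.eval t ∈ Icc μ (μ + 1) ∧ ∃ j, 1 ≤ j ∧ j ≤ k ∧
      (2 * k ^ 2 / η) ^ j < |(Polynomial.hasseDeriv j p).eval t|} ≤ ENNReal.ofReal η := by
  have hk0 : (0 : ℝ) < k := by exact_mod_cast hk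
  set H : ℝ := 2 * k ^ 2 / η with hH
  have hH0 : 0 < H := by positivity
  have hder : ∀ j, (Polynomial.hasseDeriv j p).derivative =
      (j + 1) • Polynomial.hasseDeriv (j + 1) p := fun j => by
    have := congrArg (fun f => f p) (Polynomial.hasseDeriv_comp (R := ℝ) 1 j)
    rw [add_comm 1 j] at this
    simpa only [LinearMap.comp_apply, Polynomial.hasseDeriv_one, Nat.choose_one_right,
      LinearMap.smul_apply] using this
  let V : ℕ → Set ℝ := fun j => {t | (Polynomial.hasseDeriv j p).eval t ∈
    Icc (if j = 0 then μ else -H ^ j) (if j = 0 then μ + 1 else H ^ j) ∧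
    H ^ (j + 1) < |(Polynomial.hasseDeriv j p).derivative.eval t|}
  have hV : ∀ j, volume (V j) ≤ ENNReal.ofReal (η / k) := fun j => by
    have hHj : 0 < H ^ j := by positivity
    refine (volume_eval_mem_Icc_and_lt_abs_derivative_le _
      ((Polynomial.natDegree_hasseDeriv_le p j).trans (by omega : _ ≤ k)) (by positivity)).trans ?_
    · refine ENNReal.ofReal_le_ofReal ?_
      have h1 : (if j = 0 then μ + 1 else H ^ j) - (if j = 0 then μ else -H ^ j) ≤ 2 * H ^ j := by
        split_ifs with h
        · simp [h]
        · linarith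
      calc _ ≤ k * (2 * H ^ j) / H ^ (j + 1) := by gcongr
        _ = η / k := by
          rw [pow_succ]
          have : H * η = 2 * k ^ 2 := by rw [hH]; field_simp
          field_simp
          linarith
  have hsub : {t | p.eval t ∈ Icc μ (μ + 1) ∧ ∃ j, 1 ≤ j ∧ j ≤ k ∧
      H ^ j < |(Polynomial.hasseDeriv j p).eval t|} ⊆ ⋃ j ∈ Finset.range k, V j := by
    classical
    rintro t ⟨ht, hex⟩
    obtain ⟨h1, h2, h3⟩ := Nat.find_spec hex
    have hmin := fun m => Nat.find_min hex (m := m)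
    generalize Nat.find hex = j at h1 h2 h3 hmin
    obtain ⟨j, rfl⟩ : ∃ i, j = i + 1 := ⟨j - 1, by omega⟩
    simp only [mem_iUnion, Finset.mem_range]
    refine ⟨j, by omega, ?_, ?_⟩
    · by_cases hj : j = 0
      · simpa [hj] using ht
      · have := hmin j (by omega)
        push Not at this
        simpa [hj, abs_le] using this (by omega) (by omega)
    · rw [hder, Polynomial.eval_smul, nsmul_eq_mul, abs_mul]
      refine h3.trans_le (le_mul_of_one_le_left (abs_nonneg _) ?_)
      rw [Nat.abs_cast]
      exact_mod_cast (by omega : 1 ≤ j + 1)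
  calc _ ≤ _ := measure_mono hsub
    _ ≤ ∑ j ∈ Finset.range k, volume (V j) := measure_biUnion_finset_le _ _
    _ ≤ ∑ j ∈ Finset.range k, ENNReal.ofReal (η / k) := Finset.sum_le_sum fun j _ => hV j
    _ = _ := by
      rw [Finset.sum_const, Finset.card_range, nsmul_eq_mul, ← ENNReal.ofReal_natCast,
        ← ENNReal.ofReal_mul (Nat.cast_nonneg k)]
      congr 1
      field_simp

theorem abs_prod_inv_sub_le {ι : Type*} (s : Finset ι) (b : ι → ℝ) {κ : ℝ} (hκ : 1 ≤ κ)
    {n : ℕ} (hs : s.card ≤ n) (hb : ∀ i ∈ s, 1 / κ ≤ |b i|) : |(∏ i ∈ s, b i)⁻¹| ≤ κ ^ n := by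
  rw [← Finset.prod_inv_distrib, Finset.abs_prod]
  calc _ ≤ ∏ i ∈ s, κ := Finset.prod_le_prod (fun _ _ => abs_nonneg _) fun i hi => by
        rw [abs_inv]
        have := inv_anti₀ (by positivity) (hb i hi)
        simpa using this
    _ = κ ^ s.card := by simp
    _ ≤ _ := pow_le_pow_right₀ hκ hs

theorem Polynomial.abs_coeff_le_of_abs_eval_le {ι : Type*} (s : Finset ι)
    (a : ι → ℝ) {κ M : ℝ} (hκ : 1 ≤ κ) (ha : ∀ i ∈ s, ∀ j ∈ s, i ≠ j → 1 / κ ≤ |a i - a j|)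
    (q : Polynomial ℝ) {n : ℕ} (hs : s.card = n + 1) (hq : q.natDegree ≤ n)
    (hM : ∀ i ∈ s, |q.eval (a i)| ≤ M) : |q.coeff n| ≤ (n + 1) * κ ^ n * M := by
  classical
  have hinj : InjOn a s := fun i hi j hj hij => by
    by_contra hne
    have := ha i hi j hj hne
    rw [hij, sub_self, abs_zero] at this
    have : 0 < 1 / κ := by positivity
    linarith
  have hdeg : q.degree < s.card := by
    rw [hs]
    exact (Polynomial.degree_le_of_natDegree_le hq).trans_lt (by exact_mod_cast Nat.lt_succ_self n)
  have := Lagrange.coeff_eq_sum hinj hdeg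
  rw [hs, Nat.add_sub_cancel] at this
  rw [this]
  calc _ ≤ ∑ i ∈ s, |q.eval (a i) / ∏ j ∈ s.erase i, (a i - a j)| := Finset.abs_sum_le_sum_abs _ _
    _ ≤ ∑ i ∈ s, κ ^ n * M := Finset.sum_le_sum fun i hi => by
      rw [div_eq_inv_mul, abs_mul]
      gcongr
      · refine abs_prod_inv_sub_le _ _ hκ ?_ fun j hj => ?_
        · rw [Finset.card_erase_of_mem hi, hs, Nat.add_sub_cancel]
        · exact ha i hi j (Finset.mem_of_mem_erase hj) (Finset.ne_of_mem_erase hj).symm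
      · exact hM i hi
    _ = _ := by rw [Finset.sum_const, hs, nsmul_eq_mul]; push_cast; ring

open Classical in
/-- The value at `x` of the Lagrange interpolant of the values `c` at the nodes `a i`, `i ∈ s`. -/
def lagrangeValue {ι : Type*} (s : Finset ι) (a c : ι → ℝ) (x : ℝ) : ℝ :=
  ∑ m ∈ s, c m * ((∏ j ∈ s.erase m, (x - a j)) * (∏ j ∈ s.erase m, (a m - a j))⁻¹)

theorem Polynomial.eval_eq_lagrangeValue {ι : Type*} (s : Finset ι) (a : ι → ℝ)
    (ha : InjOn a s) (q : Polynomial ℝ) (hq : q.degree < s.card) (x : ℝ) :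
    q.eval x = lagrangeValue s a (fun m => q.eval (a m)) x := by
  classical
  nth_rewrite 1 [Lagrange.eq_interpolate ha hq]
  rw [Lagrange.interpolate_apply, Polynomial.eval_finsetSum]
  unfold lagrangeValue
  refine Finset.sum_congr rfl fun m _ => ?_
  rw [Polynomial.eval_mul, Polynomial.eval_C, Lagrange.basis, Polynomial.eval_prod,
    ← Finset.prod_inv_distrib, ← Finset.prod_mul_distrib]
  congr 1
  refine Finset.prod_congr (by congr) fun j _ => ?_
  simp [Lagrange.basisDivisor, mul_comm]

theorem abs_lagrangeValue_le {ι : Type*} (s : Finset ι) (a d : ι → ℝ) (x : ℝ) {κ M : ℝ}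
    (hκ : 1 ≤ κ) {n : ℕ} (hs : s.card ≤ n)
    (ha : ∀ i ∈ s, ∀ j ∈ s, i ≠ j → 1 / κ ≤ |a i - a j|)
    (hx : ∀ i ∈ s, |x - a i| ≤ 1) (hM0 : 0 ≤ M) (hd : ∀ i ∈ s, |d i| ≤ M) :
    |lagrangeValue s a d x| ≤ n * κ ^ n * M := by
  classical
  calc _ ≤ ∑ m ∈ s, |d m * ((∏ j ∈ s.erase m, (x - a j)) * (∏ j ∈ s.erase m, (a m - a j))⁻¹)| :=
        Finset.abs_sum_le_sum_abs _ _ |>.trans_eq' (by unfold lagrangeValue; congr!)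
    _ ≤ ∑ m ∈ s, M * (1 * κ ^ n) := Finset.sum_le_sum fun m hm => by
        rw [abs_mul, abs_mul]
        gcongr
        · exact hd m hm
        · rw [Finset.abs_prod]
          exact Finset.prod_le_one (fun _ _ => abs_nonneg _)
            fun j hj => hx j (Finset.mem_of_mem_erase hj)
        · refine abs_prod_inv_sub_le _ _ hκ ((Finset.card_erase_le).trans hs) fun j hj => ?_
          exact ha m hm j (Finset.mem_of_mem_erase hj) (Finset.ne_of_mem_erase hj).symm
    _ = s.card * (κ ^ n * M) := by rw [Finset.sum_const, nsmul_eq_mul]; ring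
    _ ≤ _ := by rw [mul_assoc]; gcongr

theorem lintegral_Icc_ofReal_of_hasDerivAt {a b : ℝ} (hab : a ≤ b) {f F : ℝ → ℝ}
    (hf : ContinuousOn f (Icc a b)) (hf0 : ∀ t ∈ Icc a b, 0 ≤ f t)
    (hF : ∀ t ∈ Icc a b, HasDerivAt F (f t) t) :
    ∫⁻ t in Icc a b, ENNReal.ofReal (f t) = ENNReal.ofReal (F b - F a) := by
  rw [← intervalIntegral.integral_eq_sub_of_hasDerivAt (f' := f) (by rwa [uIcc_of_le hab])
    ((by rwa [uIcc_of_le hab] : ContinuousOn f (uIcc a b)).intervalIntegrable),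
    intervalIntegral.integral_of_le hab, ← integral_Icc_eq_integral_Ioc,
    ofReal_integral_eq_lintegral_ofReal hf.integrableOn_Icc
      ((ae_restrict_iff' measurableSet_Icc).2 (ae_of_all _ hf0))]

theorem lintegral_one_div_one_add_mul_abs_sub_le {H : ℝ} (hH : 0 < H) (s : ℝ) :
    ∫⁻ t in Icc (0 : ℝ) 1, ENNReal.ofReal (1 / (1 + H * |t - s|)) ≤
      ENNReal.ofReal (2 * log (1 + H) / H) := by
  set r : ℝ := max 0 (min 1 s) with hr
  have hr0 : 0 ≤ r := le_max_left _ _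
  have hr1 : r ≤ 1 := max_le zero_le_one (min_le_left _ _)
  have hclamp : ∀ t ∈ Icc (0 : ℝ) 1, |t - r| ≤ |t - s| := by
    rintro t ⟨h0, h1⟩
    rw [hr]
    rcases le_total s 0 with h | h
    · rw [min_eq_right (h.trans zero_le_one), max_eq_left h, abs_of_nonneg (by linarith),
        abs_of_nonneg (by linarith)]
      linarith
    · rcases le_total s 1 with h' | h'
      · rw [min_eq_right h', max_eq_right h]
      · rw [min_eq_left h', max_eq_right zero_le_one, abs_of_nonpos (by linarith),
          abs_of_nonpos (by linarith)]
        linarith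
  have hleft : ∫⁻ t in Icc 0 r, ENNReal.ofReal (1 / (1 + H * |t - r|)) =
      ENNReal.ofReal (log (1 + H * r) / H) := by
    have h1 := lintegral_Icc_ofReal_of_hasDerivAt hr0 (f := fun t => 1 / (1 + H * (r - t)))
      (F := fun t => -(log (1 + H * (r - t)) / H)) ?_ ?_ ?_
    · rw [show log (1 + H * r) / H = -(log (1 + H * (r - r)) / H) - -(log (1 + H * (r - 0)) / H) by
        simp, ← h1]
      refine setLIntegral_congr_fun measurableSet_Icc fun t ht => ?_
      simp only [abs_of_nonpos (sub_nonpos.2 ht.2), neg_sub]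
    · refine continuousOn_const.div (by fun_prop) fun t ht => ?_
      have := mul_nonneg hH.le (sub_nonneg.2 ht.2)
      positivity
    · intro t ht
      have := mul_nonneg hH.le (sub_nonneg.2 ht.2)
      positivity
    · intro t ht
      have := mul_nonneg hH.le (sub_nonneg.2 ht.2)
      have h3 : HasDerivAt (fun t => 1 + H * (r - t)) (H * (-1)) t :=
        (((hasDerivAt_id t).const_sub r).const_mul H).const_add 1
      have h4 : 1 + H * (r - t) ≠ 0 := by positivity
      exact ((h3.log h4).div_const H).neg.congr_deriv (by field_simp)
  have hright : ∫⁻ t in Icc r 1, ENNReal.ofReal (1 / (1 + H * |t - r|)) =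
      ENNReal.ofReal (log (1 + H * (1 - r)) / H) := by
    have h1 := lintegral_Icc_ofReal_of_hasDerivAt hr1 (f := fun t => 1 / (1 + H * (t - r)))
      (F := fun t => log (1 + H * (t - r)) / H) ?_ ?_ ?_
    · rw [show log (1 + H * (1 - r)) / H = log (1 + H * (1 - r)) / H - log (1 + H * (r - r)) / H by
        simp, ← h1]
      refine setLIntegral_congr_fun measurableSet_Icc fun t ht => ?_
      simp only [abs_of_nonneg (sub_nonneg.2 ht.1)]
    · refine continuousOn_const.div (by fun_prop) fun t ht => ?_
      have := mul_nonneg hH.le (sub_nonneg.2 ht.1)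
      positivity
    · intro t ht
      have := mul_nonneg hH.le (sub_nonneg.2 ht.1)
      positivity
    · intro t ht
      have := mul_nonneg hH.le (sub_nonneg.2 ht.1)
      have h3 : HasDerivAt (fun t => 1 + H * (t - r)) (H * 1) t :=
        (((hasDerivAt_id t).sub_const r).const_mul H).const_add 1
      have h4 : 1 + H * (t - r) ≠ 0 := by positivity
      exact ((h3.log h4).div_const H).congr_deriv (by field_simp)
  have hlog : ∀ y, 0 ≤ y → y ≤ 1 → log (1 + H * y) / H ≤ log (1 + H) / H := fun y h0 h1 => by
    have := mul_nonneg hH.le h0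
    gcongr
    nlinarith
  calc _ ≤ ∫⁻ t in Icc (0 : ℝ) 1, ENNReal.ofReal (1 / (1 + H * |t - r|)) := by
        refine setLIntegral_mono' measurableSet_Icc fun t ht => ENNReal.ofReal_le_ofReal ?_
        have := hclamp t ht
        gcongr
    _ ≤ ∫⁻ t in Icc 0 r ∪ Icc r 1, ENNReal.ofReal (1 / (1 + H * |t - r|)) := by
        rw [Icc_union_Icc_eq_Icc hr0 hr1]
    _ ≤ _ := lintegral_union_le _ _ _
    _ ≤ ENNReal.ofReal (log (1 + H) / H) + ENNReal.ofReal (log (1 + H) / H) := by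
        rw [hleft, hright]
        gcongr ENNReal.ofReal ?_ + ENNReal.ofReal ?_
        · exact hlog r hr0 hr1
        · exact hlog _ (by linarith) (by linarith)
    _ = _ := by
        have : 0 ≤ log (1 + H) / H := div_nonneg (log_nonneg (by linarith)) hH.le
        rw [← ENNReal.ofReal_add this this]
        congr 1
        ring

/-- The `j`-th Taylor coefficient of `t ↦ P((a, t); x)`. -/
def taylorCoeff (k : ℕ) (x : Idx k → ℝ) (j : ℕ) (a t : ℝ) : ℝ :=
  ∑ β : Idx k, x β * a ^ (β.1.1 : ℕ) * ((β.1.2 : ℕ).choose j * t ^ ((β.1.2 : ℕ) - j))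

/-- The polynomial in `ξ₁` multiplying `ξ₂ ^ j` in `P(ξ; x)`. -/
def layerPoly (k : ℕ) (x : Idx k → ℝ) (j : ℕ) : Polynomial ℝ :=
  ∑ β : Idx k, if (β.1.2 : ℕ) = j then Polynomial.monomial (β.1.1 : ℕ) (x β) else 0

theorem taylorCoeff_sub (k : ℕ) (x y : Idx k → ℝ) (j : ℕ) (a t : ℝ) :
    taylorCoeff k (x - y) j a t = taylorCoeff k x j a t - taylorCoeff k y j a t := by
  simp only [taylorCoeff, ← Finset.sum_sub_distrib, Pi.sub_apply]
  exact Finset.sum_congr rfl fun β _ => by ring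

theorem taylorCoeff_zero (k : ℕ) (x : Idx k → ℝ) (a t : ℝ) :
    taylorCoeff k x 0 a t = ∑ β : Idx k, x β * a ^ (β.1.1 : ℕ) * t ^ (β.1.2 : ℕ) := by
  simp [taylorCoeff]

theorem continuous_taylorCoeff (k j : ℕ) :
    Continuous fun q : (Idx k → ℝ) × ℝ × ℝ => taylorCoeff k q.1 j q.2.1 q.2.2 := by
  unfold taylorCoeff
  fun_prop

theorem eval_layerPoly (k : ℕ) (x : Idx k → ℝ) (j : ℕ) (a : ℝ) :
    (layerPoly k x j).eval a =
      ∑ β : Idx k, if (β.1.2 : ℕ) = j then x β * a ^ (β.1.1 : ℕ) else 0 := by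
  rw [layerPoly, Polynomial.eval_finsetSum]
  refine Finset.sum_congr rfl fun β _ => ?_
  split_ifs <;> simp

theorem natDegree_layerPoly_le (k : ℕ) (x : Idx k → ℝ) (j n : ℕ)
    (h : ∀ β : Idx k, (β.1.2 : ℕ) = j → n < (β.1.1 : ℕ) → x β = 0) :
    (layerPoly k x j).natDegree ≤ n := by
  refine Polynomial.natDegree_sum_le_of_forall_le _ _ fun β _ => ?_
  split_ifs with hj
  · by_cases hn : n < (β.1.1 : ℕ)
    · simp [h β hj hn]
    · exact (Polynomial.natDegree_monomial_le _).trans (not_lt.1 hn)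
  · simp

theorem coeff_layerPoly (k : ℕ) (x : Idx k → ℝ) (β : Idx k) :
    (layerPoly k x β.1.2).coeff β.1.1 = x β := by
  rw [layerPoly, Polynomial.finsetSum_coeff, Finset.sum_eq_single β]
  · simp
  · intro γ _ hne
    split_ifs with h2
    · rw [Polynomial.coeff_monomial, if_neg]
      intro h1
      exact hne (Subtype.ext (Prod.ext (Fin.ext h1) (Fin.ext h2)))
    · simp
  · simp

theorem taylorCoeff_eq_of_vanish (k : ℕ) (z : Idx k → ℝ) (j : ℕ)
    (h : ∀ β : Idx k, j + 1 < (β.1.2 : ℕ) → z β = 0) (a t : ℝ) :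
    taylorCoeff k z j a t =
      (layerPoly k z j).eval a + (j + 1) * t * (layerPoly k z (j + 1)).eval a := by
  rw [eval_layerPoly, eval_layerPoly, Finset.mul_sum, ← Finset.sum_add_distrib]
  refine Finset.sum_congr rfl fun β _ => ?_
  rcases lt_trichotomy (β.1.2 : ℕ) j with hlt | heq | hgt
  · simp [Nat.choose_eq_zero_of_lt hlt, hlt.ne, (hlt.trans (Nat.lt_succ_self j)).ne]
  · simp [heq]
  · rcases (Nat.succ_le_of_lt hgt).eq_or_lt with heq | hgt'
    · rw [Nat.succ_eq_add_one] at heq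
      rw [← heq]
      simp
      ring
    · simp [h β hgt']

theorem taylorCoeff_eq_layerPoly (k : ℕ) (z : Idx k → ℝ) (j : ℕ)
    (h : ∀ β : Idx k, j < (β.1.2 : ℕ) → z β = 0) (a t : ℝ) :
    taylorCoeff k z j a t = (layerPoly k z j).eval a := by
  rw [taylorCoeff_eq_of_vanish k z j fun β hβ => h β ((Nat.lt_succ_self j).trans hβ)]
  have : layerPoly k z (j + 1) = 0 := by
    refine Finset.sum_eq_zero fun β _ => ?_
    split_ifs with hj
    · simp [h β (by omega)]
    · rfl
  simp [this]

/-- An injective rank on multi-indices, decreasing in `β₂` and then in `β₁`. -/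
def idxRank (k : ℕ) (β : Idx k) : ℕ := (k - β.1.2) * (k + 1) + (k - β.1.1)

theorem idxRank_lt_iff {k : ℕ} (β γ : Idx k) : idxRank k β < idxRank k γ ↔
    (γ.1.2 : ℕ) < β.1.2 ∨ (γ.1.2 : ℕ) = β.1.2 ∧ (γ.1.1 : ℕ) < β.1.1 := by
  have h1 := β.1.1.2
  have h2 := β.1.2.2
  have h3 := γ.1.1.2
  have h4 := γ.1.2.2
  unfold idxRank
  rcases lt_trichotomy (γ.1.2 : ℕ) β.1.2 with h | h | h
  · have : (k - β.1.2 + 1) * (k + 1) ≤ (k - γ.1.2) * (k + 1) := Nat.mul_le_mul_right _ (by omega)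
    simp only [h, true_or, iff_true]
    rw [add_mul] at this
    omega
  · rw [h]
    omega
  · have : (k - γ.1.2 + 1) * (k + 1) ≤ (k - β.1.2) * (k + 1) := Nat.mul_le_mul_right _ (by omega)
    rw [add_mul] at this
    omega

theorem idxRank_injective (k : ℕ) : Function.Injective (idxRank k) := by
  intro β γ h
  have h1 := (idxRank_lt_iff β γ).not.1 h.not_lt
  have h2 := (idxRank_lt_iff γ β).not.1 h.not_gt
  exact Subtype.ext (Prod.ext (Fin.ext (by omega)) (Fin.ext (by omega)))

/-- The deviation of the `i`-th point from the curve interpolating the previous ones. -/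
def interpDev {n : ℕ} (p : Fin n → ℝ × ℝ) (i : Fin n) : ℝ :=
  (p i).2 - lagrangeValue (Finset.univ.filter (· < i)) (fun m => (p m).1) (fun m => (p m).2) (p i).1

/-- Configurations of coefficients and points in the unit square, with well separated abscissae,
at which the phase varies slowly along vertical lines and takes nearly equal values. -/
def slowConfig (k : ℕ) (H κ : ℝ) : Set ((Idx k → ℝ) × (Fin (k + 1) → ℝ × ℝ)) :=
  {q | (∀ i, q.2 i ∈ Icc (0 : ℝ) 1 ×ˢ Icc (0 : ℝ) 1) ∧
    (∀ i j, i ≠ j → 1 / κ ≤ |(q.2 i).1 - (q.2 j).1|) ∧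
    (∀ i j, 1 ≤ j → j ≤ k → |taylorCoeff k q.1 j (q.2 i).1 (q.2 i).2| ≤ H ^ j) ∧
    ∀ i, |taylorCoeff k q.1 0 (q.2 i).1 (q.2 i).2 - taylorCoeff k q.1 0 (q.2 0).1 (q.2 0).2| ≤ 1}

theorem isClosed_slowConfig (k : ℕ) (H κ : ℝ) : IsClosed (slowConfig k H κ) := by
  have hT : ∀ j (i : Fin (k + 1)), Continuous fun q : (Idx k → ℝ) × (Fin (k + 1) → ℝ × ℝ) =>
      taylorCoeff k q.1 j (q.2 i).1 (q.2 i).2 := fun j i =>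
    (continuous_taylorCoeff k j).comp (g := fun q : (Idx k → ℝ) × ℝ × ℝ =>
      taylorCoeff k q.1 j q.2.1 q.2.2)
      (f := fun q : (Idx k → ℝ) × (Fin (k + 1) → ℝ × ℝ) => (q.1, q.2 i)) (by fun_prop)
  simp only [slowConfig, ofPred_and, ofPred_forall]
  refine IsClosed.inter ?_ (IsClosed.inter ?_ (IsClosed.inter ?_ ?_))
  · refine isClosed_iInter fun i => ?_
    exact (isClosed_Icc.prod isClosed_Icc).preimage (by fun_prop :
      Continuous fun q : (Idx k → ℝ) × (Fin (k + 1) → ℝ × ℝ) => q.2 i)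
  · refine isClosed_iInter fun i => isClosed_iInter fun j => isClosed_iInter fun _ => ?_
    exact isClosed_le continuous_const (by fun_prop)
  · refine isClosed_iInter fun i => isClosed_iInter fun j => isClosed_iInter fun _ =>
      isClosed_iInter fun _ => ?_
    exact isClosed_le (hT j i).abs continuous_const
  · refine isClosed_iInter fun i => ?_
    exact isClosed_le ((hT 0 i).sub (hT 0 0)).abs continuous_const

/-- The row at which the coefficient of `ξ₂ ^ β₂` is additionally constrained. -/
def gainRow (k : ℕ) (β : Idx k) : Fin (k + 1) := Fin.ofNat (k + 1) (k + 2 - β.1.2)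

theorem gainRow_val {k : ℕ} {β : Idx k} (h : 2 ≤ (β.1.2 : ℕ)) :
    (gainRow k β : ℕ) = k + 2 - β.1.2 := by
  have := β.1.2.2
  simp only [gainRow, Fin.val_ofNat]
  exact Nat.mod_eq_of_lt (by omega)

/-- The bound for the coordinate `β` on a slice of `slowConfig`, up to a constant. -/
def coordBound (k : ℕ) (H : ℝ) (p : Fin (k + 1) → ℝ × ℝ) (β : Idx k) : ℝ :=
  H ^ (β.1.2 : ℕ) * if (β.1.1 : ℕ) = 0 ∧ 2 ≤ (β.1.2 : ℕ) then
    1 / (1 + H * |interpDev p (gainRow k β)|) else 1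

theorem abs_sub_le_of_mem_slowConfig {k : ℕ} {H κ : ℝ} (hH : 0 < H) (hκ : 1 ≤ κ)
    {p : Fin (k + 1) → ℝ × ℝ} {x y : Idx k → ℝ} (hx : (x, p) ∈ slowConfig k H κ)
    (hy : (y, p) ∈ slowConfig k H κ) (β : Idx k)
    (hxy : ∀ γ, idxRank k γ < idxRank k β → x γ = y γ) :
    |x β - y β| ≤ 4 * (k + 1) * κ ^ k * coordBound k H p β := by
  obtain ⟨hp, hsep, hx1, hx0⟩ := hx
  obtain ⟨-, -, hy1, hy0⟩ := hy
  simp only at hp hsep hx1 hx0 hy1 hy0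
  set z := x - y with hz
  have hzβ : x β - y β = z β := rfl
  rw [hzβ]
  have hz0 : ∀ γ, (β.1.2 : ℕ) < γ.1.2 ∨ (β.1.2 : ℕ) = γ.1.2 ∧ (β.1.1 : ℕ) < γ.1.1 → z γ = 0 :=
    fun γ hγ => by simp [hz, hxy γ ((idxRank_lt_iff γ β).2 hγ)]
  have hz1 : ∀ i j, 1 ≤ j → j ≤ k → |taylorCoeff k z j (p i).1 (p i).2| ≤ 2 * H ^ j :=
    fun i j h1 h2 => by
      rw [hz, taylorCoeff_sub]
      have := abs_sub (taylorCoeff k x j (p i).1 (p i).2) (taylorCoeff k y j (p i).1 (p i).2)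
      linarith [hx1 i j h1 h2, hy1 i j h1 h2]
  have hzz : ∀ i, |taylorCoeff k z 0 (p i).1 (p i).2 - taylorCoeff k z 0 (p 0).1 (p 0).2| ≤ 2 :=
    fun i => by
      rw [hz, taylorCoeff_sub, taylorCoeff_sub]
      have := abs_sub (taylorCoeff k x 0 (p i).1 (p i).2 - taylorCoeff k x 0 (p 0).1 (p 0).2)
        (taylorCoeff k y 0 (p i).1 (p i).2 - taylorCoeff k y 0 (p 0).1 (p 0).2)
      rw [sub_sub_sub_comm]
      linarith [hx0 i, hy0 i]
  have hβ := β.2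
  have hlayer : ∀ a t, taylorCoeff k z β.1.2 a t = (layerPoly k z β.1.2).eval a :=
    taylorCoeff_eq_layerPoly k z _ fun γ hγ => hz0 γ (Or.inl hγ)
  have hdeg : (layerPoly k z β.1.2).natDegree ≤ β.1.1 :=
    natDegree_layerPoly_le k z _ _ fun γ h1 h2 => hz0 γ (Or.inr ⟨h1.symm, h2⟩)
  have hsepI : ∀ s : Finset (Fin (k + 1)), ∀ i ∈ s, ∀ j ∈ s, i ≠ j →
      1 / κ ≤ |(p i).1 - (p j).1| := fun s i _ j _ hij => hsep i j hij
  have hκk : 1 ≤ κ ^ k := one_le_pow₀ hκ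
  have htop : |z β| ≤ 2 * (k + 1) * κ ^ k * H ^ (β.1.2 : ℕ) := by
    obtain ⟨s, -, hs⟩ := Finset.exists_subset_card_eq
      (s := (Finset.univ : Finset (Fin (k + 1)))) (n := (β.1.1 : ℕ) + 1) (by
        rw [Finset.card_univ, Fintype.card_fin]; omega)
    have hfin : ((β.1.1 : ℕ) + 1 : ℝ) * κ ^ (β.1.1 : ℕ) * (2 * H ^ (β.1.2 : ℕ)) ≤
        2 * (k + 1) * κ ^ k * H ^ (β.1.2 : ℕ) := by
      have h1 : ((β.1.1 : ℕ) : ℝ) ≤ k := by exact_mod_cast (by omega : (β.1.1 : ℕ) ≤ k)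
      have h2 : κ ^ (β.1.1 : ℕ) ≤ κ ^ k := pow_le_pow_right₀ hκ (by omega)
      calc _ ≤ ((k : ℝ) + 1) * κ ^ k * (2 * H ^ (β.1.2 : ℕ)) := by gcongr
        _ = _ := by ring
    refine le_trans ?_ hfin
    by_cases hj : (β.1.2 : ℕ) = 0
    · set c := (layerPoly k z β.1.2).eval (p 0).1
      have hco : (layerPoly k z β.1.2 - Polynomial.C c).coeff β.1.1 = z β := by
        rw [Polynomial.coeff_sub, coeff_layerPoly, Polynomial.coeff_C_of_ne_zero (by omega),
          sub_zero]
      rw [← hco]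
      refine Polynomial.abs_coeff_le_of_abs_eval_le s (fun i => (p i).1) hκ (hsepI s) _ hs
        (by rwa [Polynomial.natDegree_sub_C]) fun i _ => ?_
      have h0 : ∀ a t, taylorCoeff k z 0 a t = (layerPoly k z β.1.2).eval a := fun a t =>
        (congrArg (taylorCoeff k z · a t) hj).symm.trans (hlayer a t)
      have := hzz i
      rw [h0, h0] at this
      rw [Polynomial.eval_sub, Polynomial.eval_C]
      simpa [c, hj] using this
    · rw [← coeff_layerPoly k z β]
      refine Polynomial.abs_coeff_le_of_abs_eval_le s (fun i => (p i).1) hκ (hsepI s) _ hs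
        hdeg fun i _ => ?_
      rw [← hlayer _ (p i).2]
      exact hz1 i _ (by omega) (by omega)
  unfold coordBound
  split_ifs with hg
  · obtain ⟨hg1, hg2⟩ := hg
    obtain ⟨j, hj⟩ : ∃ j, (β.1.2 : ℕ) = j + 1 := ⟨β.1.2 - 1, by omega⟩
    set i := gainRow k β with hi
    have hival : (i : ℕ) = k + 1 - j := by rw [hi, gainRow_val hg2]; omega
    set s := Finset.univ.filter (· < i) with hs
    have hscard : s.card = i := by
      rw [hs, ← Fin.card_Iio i]
      congr 1
      ext m
      simp
    set q := layerPoly k z j with hq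
    have hqdeg : q.degree < s.card := by
      have : q.natDegree ≤ k - j := natDegree_layerPoly_le k z _ _ fun γ h1 h2 => by
        have := γ.2; omega
      exact (Polynomial.degree_le_of_natDegree_le this).trans_lt (by
        rw [hscard, hival]; exact Nat.cast_lt.2 (by omega : k - j < k + 1 - j))
    have hT : ∀ m, taylorCoeff k z j (p m).1 (p m).2 =
        q.eval (p m).1 + (j + 1) * (p m).2 * z β := fun m => by
      rw [taylorCoeff_eq_of_vanish k z j fun γ hγ => hz0 γ (Or.inl (by omega)), ← hj,
        Polynomial.eq_C_of_natDegree_le_zero (hdeg.trans hg1.le), Polynomial.eval_C]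
      rw [← hg1, coeff_layerPoly]
    have hinj : InjOn (fun m => (p m).1) s := fun m _ m' _ h => by
      by_contra hne
      have h1 := hsep m m' hne
      simp only at h
      rw [h, sub_self, abs_zero] at h1
      have : 0 < 1 / κ := by positivity
      linarith
    have hkey : (j + 1) * z β * interpDev p i = taylorCoeff k z j (p i).1 (p i).2 -
        lagrangeValue s (fun m => (p m).1) (fun m => taylorCoeff k z j (p m).1 (p m).2)
          (p i).1 := by
      have h1 := Polynomial.eval_eq_lagrangeValue s (fun m => (p m).1) hinj q hqdeg (p i).1
      have h2 : lagrangeValue s (fun m => (p m).1)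
          (fun m => q.eval (p m).1 + (j + 1) * (p m).2 * z β) (p i).1 =
          lagrangeValue s (fun m => (p m).1) (fun m => q.eval (p m).1) (p i).1 +
          (j + 1) * z β * lagrangeValue s (fun m => (p m).1) (fun m => (p m).2) (p i).1 := by
        simp only [lagrangeValue]
        rw [Finset.mul_sum, ← Finset.sum_add_distrib]
        exact Finset.sum_congr rfl fun m _ => by ring
      simp only [hT]
      rw [h2, h1, interpDev, ← hs]
      ring
    have hlag : |lagrangeValue s (fun m => (p m).1)
        (fun m => taylorCoeff k z j (p m).1 (p m).2) (p i).1| ≤ k * κ ^ k * (2 * H ^ j) := by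
      refine abs_lagrangeValue_le s _ _ _ hκ ?_ (hsepI s) ?_ (by positivity) ?_
      · rw [hscard]; omega
      · intro m _
        have h1 := (hp i).1
        have h2 := (hp m).1
        rw [abs_le]
        constructor <;> linarith [h1.1, h1.2, h2.1, h2.2]
      · exact fun m _ => hz1 m j (by omega) (by omega)
    have hB : |z β| * |interpDev p i| ≤ 2 * (k + 1) * κ ^ k * H ^ j := by
      have h1 : |z β| * |interpDev p i| ≤ |(j + 1) * z β * interpDev p i| := by
        rw [abs_mul, abs_mul, mul_assoc]
        refine le_mul_of_one_le_left (by positivity) ?_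
        rw [abs_of_nonneg (by positivity)]
        linarith [(Nat.cast_nonneg j : (0 : ℝ) ≤ j)]
      have h2 : |(j + 1) * z β * interpDev p i| ≤ 2 * H ^ j + k * κ ^ k * (2 * H ^ j) := by
        rw [hkey]
        exact (abs_sub _ _).trans (add_le_add (hz1 i j (by omega) (by omega)) hlag)
      have h3 : H ^ j ≤ κ ^ k * H ^ j := le_mul_of_one_le_left (by positivity) hκk
      calc _ ≤ 2 * H ^ j + k * κ ^ k * (2 * H ^ j) := h1.trans h2
        _ ≤ 2 * (κ ^ k * H ^ j) + k * κ ^ k * (2 * H ^ j) := by gcongr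
        _ = _ := by ring
    rw [mul_one_div, ← mul_div_assoc, le_div_iff₀ (by positivity)]
    calc |z β| * (1 + H * |interpDev p i|) = |z β| + H * (|z β| * |interpDev p i|) := by ring
      _ ≤ 2 * (k + 1) * κ ^ k * H ^ (β.1.2 : ℕ) + H * (2 * (k + 1) * κ ^ k * H ^ j) := by gcongr
      _ = _ := by rw [hj, pow_succ]; ring
  · refine htop.trans ?_
    have : 0 ≤ (k + 1) * κ ^ k * H ^ (β.1.2 : ℕ) := by positivity
    nlinarith

theorem volume_slowConfig_slice_le (k : ℕ) {H κ : ℝ} (hH : 0 < H) (hκ : 1 ≤ κ)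
    (p : Fin (k + 1) → ℝ × ℝ) :
    volume ((fun x => (x, p)) ⁻¹' slowConfig k H κ) ≤
      ∏ β : Idx k, ENNReal.ofReal (4 * (k + 1) * κ ^ k * coordBound k H p β) :=
  volume_le_prod_of_rank (idxRank k) (idxRank_injective k) _
    (measurable_prodMk_right (isClosed_slowConfig k H κ).measurableSet) _
    fun β _ hx _ hy h => abs_sub_le_of_mem_slowConfig hH hκ hx hy β h

theorem measurable_interpDev {n : ℕ} (i : Fin n) :
    Measurable fun p : Fin n → ℝ × ℝ => interpDev p i := by
  unfold interpDev lagrangeValue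
  fun_prop

theorem lagrangeValue_congr {ι : Type*} {s : Finset ι} {a a' c c' : ι → ℝ}
    (ha : ∀ m ∈ s, a m = a' m) (hc : ∀ m ∈ s, c m = c' m) (x : ℝ) :
    lagrangeValue s a c x = lagrangeValue s a' c' x := by
  classical
  unfold lagrangeValue
  refine Finset.sum_congr rfl fun m hm => ?_
  rw [ha m hm, hc m hm]
  congr 2
  · exact Finset.prod_congr rfl fun j hj => by rw [ha j (Finset.mem_of_mem_erase hj)]
  · exact congrArg _ <|
      Finset.prod_congr rfl fun j hj => by rw [ha j (Finset.mem_of_mem_erase hj)]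

theorem interpDev_congr {n : ℕ} {p q : Fin n → ℝ × ℝ} {i : Fin n} (h : ∀ m ≤ i, p m = q m) :
    interpDev p i = interpDev q i := by
  unfold interpDev
  rw [h i le_rfl]
  congr 1
  refine lagrangeValue_congr (fun m hm => ?_) (fun m hm => ?_) _ <;>
    rw [h m (Finset.mem_filter.1 hm).2.le]

theorem interpDev_update {n : ℕ} (p : Fin n → ℝ × ℝ) (i : Fin n) (a t : ℝ) :
    interpDev (Function.update p i (a, t)) i = t - lagrangeValue (Finset.univ.filter (· < i))
      (fun m => (p m).1) (fun m => (p m).2) a := by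
  unfold interpDev
  rw [Function.update_self]
  congr 1
  refine lagrangeValue_congr (fun m hm => ?_) (fun m hm => ?_) _ <;>
    rw [Function.update_of_ne (Finset.mem_filter.1 hm).2.ne]

theorem lintegral_interpDev_update_le {n : ℕ} {H : ℝ} (hH : 0 < H) (p : Fin n → ℝ × ℝ)
    (i : Fin n) :
    ∫⁻ s, ENNReal.ofReal (1 / (1 + H * |interpDev (Function.update p i s) i|))
      ∂(volume : Measure (ℝ × ℝ)).restrict (Icc 0 1 ×ˢ Icc 0 1) ≤
      ENNReal.ofReal (2 * log (1 + H) / H) := by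
  have hmeas : Measurable fun s : ℝ × ℝ =>
      ENNReal.ofReal (1 / (1 + H * |interpDev (Function.update p i s) i|)) := by
    have := (measurable_interpDev i).comp (measurable_update p (a := i))
    simp only [Function.comp_def] at this
    fun_prop
  rw [Measure.volume_eq_prod, ← Measure.prod_restrict, lintegral_prod _ hmeas.aemeasurable]
  calc _ ≤ ∫⁻ _ in Icc (0 : ℝ) 1, ENNReal.ofReal (2 * log (1 + H) / H) :=
        lintegral_mono fun a => by
          simp only [interpDev_update]
          exact lintegral_one_div_one_add_mul_abs_sub_le hH _
    _ = _ := by simp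

theorem prod_coordBound {k : ℕ} (H A : ℝ) (p : Fin (k + 1) → ℝ × ℝ) :
    ∏ β : Idx k, A * coordBound k H p β =
      A ^ Fintype.card (Idx k) * H ^ (∑ β : Idx k, (β.1.2 : ℕ)) *
        ∏ i : Fin (k + 1), if 2 ≤ (i : ℕ) then 1 / (1 + H * |interpDev p i|) else 1 := by
  unfold coordBound
  rw [Finset.prod_mul_distrib, Finset.prod_mul_distrib, Finset.prod_const, Finset.card_univ,
    Finset.prod_pow_eq_pow_sum, mul_assoc, ← Finset.prod_filter, ← Finset.prod_filter]
  congr 2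
  refine Finset.prod_nbij (gainRow k) ?_ ?_ ?_ fun _ _ => rfl
  · intro β hβ
    have h := (Finset.mem_filter.1 hβ).2
    have := β.2
    refine Finset.mem_filter.2 ⟨Finset.mem_univ _, ?_⟩
    rw [gainRow_val h.2]
    omega
  · intro β hβ γ hγ h
    have hb := (Finset.mem_filter.1 hβ).2
    have hc := (Finset.mem_filter.1 hγ).2
    have h' := congrArg Fin.val h
    rw [gainRow_val hb.2, gainRow_val hc.2] at h'
    have h1 := β.2
    have h2 := γ.2
    exact Subtype.ext (Prod.ext (Fin.ext (by omega)) (Fin.ext (by omega)))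
  · intro i hi
    have h := (Finset.mem_filter.1 hi).2
    have hik := i.2
    let β : Idx k := ⟨(0, ⟨k + 2 - i, by omega⟩), by simp; omega⟩
    have hβ : (β.1.2 : ℕ) = k + 2 - i := rfl
    refine ⟨β, Finset.mem_coe.2 (Finset.mem_filter.2 ⟨Finset.mem_univ _, rfl, by omega⟩), ?_⟩
    refine Fin.ext ?_
    rw [gainRow_val (by omega)]
    omega

theorem volume_slowConfig_le (k : ℕ) {H κ : ℝ} (hH : 0 < H) (hκ : 1 ≤ κ) :
    volume (slowConfig k H κ) ≤ ENNReal.ofReal ((4 * (k + 1) * κ ^ k) ^ Fintype.card (Idx k) *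
      H ^ (∑ β : Idx k, (β.1.2 : ℕ)) * (2 * log (1 + H) / H) ^ (k - 1)) := by
  set A : ℝ := 4 * (k + 1) * κ ^ k with hA
  have hA0 : 0 ≤ A := by positivity
  have hlog : 0 ≤ log (1 + H) := log_nonneg (by linarith)
  set B : ℝ := A ^ Fintype.card (Idx k) * H ^ (∑ β : Idx k, (β.1.2 : ℕ)) with hB
  have hB0 : 0 ≤ B := by positivity
  let Q : Set (ℝ × ℝ) := Icc 0 1 ×ˢ Icc 0 1
  have hQ : MeasurableSet Q := measurableSet_Icc.prod measurableSet_Icc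
  let w : Fin (k + 1) → (Fin (k + 1) → ℝ × ℝ) → ℝ := fun i p =>
    if 2 ≤ (i : ℕ) then 1 / (1 + H * |interpDev p i|) else 1
  have hw0 : ∀ i p, 0 ≤ w i p := fun i p => by
    simp only [w]
    split_ifs <;> positivity
  have hwm : ∀ i, Measurable (w i) := fun i => by
    have := measurable_interpDev i
    simp only [w]
    split_ifs <;> fun_prop
  rw [Measure.volume_eq_prod, Measure.prod_apply_symm (isClosed_slowConfig k H κ).measurableSet]
  calc _ ≤ ∫⁻ p, (univ.pi fun _ => Q).indicator
          (fun p => ENNReal.ofReal B * ∏ i, ENNReal.ofReal (w i p)) p := by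
        refine lintegral_mono fun p => ?_
        by_cases hp : p ∈ univ.pi fun _ => Q
        · rw [indicator_of_mem hp]
          refine (volume_slowConfig_slice_le k hH hκ p).trans_eq ?_
          rw [← ENNReal.ofReal_prod_of_nonneg, prod_coordBound, ENNReal.ofReal_mul hB0,
            ENNReal.ofReal_prod_of_nonneg fun i _ => hw0 i p]
          intro β _
          unfold coordBound
          split_ifs <;> positivity
        · rw [indicator_of_notMem hp, nonpos_iff_eq_zero]
          convert measure_empty (μ := (volume : Measure (Idx k → ℝ)))
          exact eq_empty_of_forall_notMem fun x hx => hp fun i _ => hx.1 i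
    _ = ENNReal.ofReal B * ∫⁻ p, ∏ i, ENNReal.ofReal (w i p)
          ∂Measure.pi fun _ : Fin (k + 1) => (volume : Measure (ℝ × ℝ)).restrict Q := by
        rw [lintegral_indicator (MeasurableSet.univ_pi fun _ => hQ), volume_pi,
          Measure.restrict_pi_pi, lintegral_const_mul]
        exact Finset.measurable_prod _ fun i _ => (hwm i).ennreal_ofReal
    _ ≤ ENNReal.ofReal B * ∏ i : Fin (k + 1),
          if 2 ≤ (i : ℕ) then ENNReal.ofReal (2 * log (1 + H) / H) else 1 := by
        gcongr
        refine lintegral_pi_prod_le _ (fun i p => ENNReal.ofReal (w i p))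
          (fun i => (hwm i).ennreal_ofReal) ?_ _ ?_
        · intro i p q h
          simp only [w, interpDev_congr h]
        · intro i p
          simp only [w]
          split_ifs
          · exact lintegral_interpDev_update_le hH p i
          · rw [lintegral_congr fun _ => ENNReal.ofReal_one, lintegral_one,
              Measure.restrict_apply_univ, Measure.volume_eq_prod, Measure.prod_prod]
            simp
    _ = _ := by
        rw [← Finset.prod_filter, Finset.prod_const, ENNReal.ofReal_mul hB0,
          ENNReal.ofReal_pow (by positivity)]
        congr 2
        have : (Finset.univ.filter fun i : Fin (k + 1) => 2 ≤ (i : ℕ)).card = k - 1 := by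
          rw [Finset.card_filter, Fin.sum_univ_eq_sum_range (fun i => if 2 ≤ i then 1 else 0),
            ← Finset.card_filter]
          have : (Finset.range (k + 1)).filter (2 ≤ ·) = Finset.Ico 2 (k + 1) := by
            ext; simp; omega
          rw [this, Nat.card_Ico]
          omega
        exact this

/-- The restriction of `P(·; x)` to the vertical line through `a`, as a polynomial in `ξ₂`. -/
def fiberPoly (k : ℕ) (x : Idx k → ℝ) (a : ℝ) : Polynomial ℝ :=
  ∑ β : Idx k, Polynomial.monomial (β.1.2 : ℕ) (x β * a ^ (β.1.1 : ℕ))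

theorem natDegree_fiberPoly_le (k : ℕ) (x : Idx k → ℝ) (a : ℝ) :
    (fiberPoly k x a).natDegree ≤ k :=
  Polynomial.natDegree_sum_le_of_forall_le _ _ fun β _ =>
    (Polynomial.natDegree_monomial_le _).trans (Nat.lt_succ_iff.1 β.1.2.2)

theorem eval_hasseDeriv_fiberPoly (k : ℕ) (x : Idx k → ℝ) (j : ℕ) (a t : ℝ) :
    (Polynomial.hasseDeriv j (fiberPoly k x a)).eval t = taylorCoeff k x j a t := by
  rw [fiberPoly, map_sum, Polynomial.eval_finsetSum]
  refine Finset.sum_congr rfl fun β _ => ?_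
  rw [Polynomial.hasseDeriv_monomial, Polynomial.eval_monomial]
  ring

theorem eval_fiberPoly (k : ℕ) (x : Idx k → ℝ) (a t : ℝ) :
    (fiberPoly k x a).eval t = taylorCoeff k x 0 a t := by
  rw [← eval_hasseDeriv_fiberPoly, Polynomial.hasseDeriv_zero, LinearMap.id_apply]

/-- The length of the part of the vertical segment over `a` where `P` lies in `[μ, μ + 1]`. -/
def fiberVol (k : ℕ) (x : Idx k → ℝ) (μ a : ℝ) : ℝ≥0∞ :=
  volume {t ∈ Icc (0 : ℝ) 1 | μ ≤ taylorCoeff k x 0 a t ∧ taylorCoeff k x 0 a t ≤ μ + 1}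

theorem continuous_taylorCoeff_uncurry (k : ℕ) (x : Idx k → ℝ) (j : ℕ) :
    Continuous fun q : ℝ × ℝ => taylorCoeff k x j q.1 q.2 :=
  (continuous_taylorCoeff k j).comp (g := fun q : (Idx k → ℝ) × ℝ × ℝ =>
    taylorCoeff k q.1 j q.2.1 q.2.2) (f := fun q : ℝ × ℝ => (x, q)) (by fun_prop)

theorem measurableSet_fiberSet (k : ℕ) (x : Idx k → ℝ) (μ : ℝ) :
    MeasurableSet {q : ℝ × ℝ | q.2 ∈ Icc (0 : ℝ) 1 ∧
      μ ≤ taylorCoeff k x 0 q.1 q.2 ∧ taylorCoeff k x 0 q.1 q.2 ≤ μ + 1} := by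
  have h := (continuous_taylorCoeff_uncurry k x 0).measurable
  exact (measurableSet_Icc.preimage measurable_snd).inter
    ((measurableSet_le measurable_const h).inter (measurableSet_le h measurable_const))

theorem mem_Lset_iff {k : ℕ} {δ : ℝ} {x : Idx k → ℝ} :
    x ∈ Lset k δ ↔ ∃ μ, ENNReal.ofReal δ < ∫⁻ a in Icc (0 : ℝ) 1, fiberVol k x μ a := by
  rw [Lset, mem_ofPred_eq, lt_iSup_iff]
  refine exists_congr fun μ => ?_
  set S : Set (ℝ × ℝ) := (Icc 0 1 ×ˢ univ) ∩ {q : ℝ × ℝ | q.2 ∈ Icc (0 : ℝ) 1 ∧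
      μ ≤ taylorCoeff k x 0 q.1 q.2 ∧ taylorCoeff k x 0 q.1 q.2 ≤ μ + 1} with hS
  have hSm : MeasurableSet S :=
    (measurableSet_Icc.prod MeasurableSet.univ).inter (measurableSet_fiberSet k x μ)
  have h1 : {ξ ∈ Icc (0 : Fin 2 → ℝ) 1 | μ ≤ Pphase k x ξ ∧ Pphase k x ξ ≤ μ + 1} =
      MeasurableEquiv.finTwoArrow ⁻¹' S := by
    ext ξ
    simp only [hS, taylorCoeff_zero, Pphase, mem_ofPred_eq, mem_preimage, mem_inter_iff, mem_prod,
      MeasurableEquiv.finTwoArrow_apply, mem_univ, and_true, mem_Icc, Pi.le_def, Fin.forall_fin_two,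
      Pi.zero_apply, Pi.one_apply]
    tauto
  rw [h1, (volume_preserving_finTwoArrow ℝ).measure_preimage hSm.nullMeasurableSet,
    Measure.volume_eq_prod, Measure.prod_apply hSm, ← lintegral_indicator measurableSet_Icc]
  refine iff_of_eq (congrArg _ (lintegral_congr fun a => ?_))
  by_cases ha : a ∈ Icc (0 : ℝ) 1
  · rw [indicator_of_mem ha, fiberVol]
    congr 1
    ext t
    simp [hS, ha.1, ha.2]
  · rw [indicator_of_notMem ha]
    convert measure_empty (μ := (volume : Measure ℝ))
    exact eq_empty_of_forall_notMem fun t ht => ha ht.1.1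

theorem ofReal_le_volume_slow_of_lt {k : ℕ} (hk : 1 ≤ k) (x : Idx k → ℝ) (μ : ℝ) {η : ℝ}
    (hη : 0 < η) {J : Set ℝ} (hJ1 : volume J ≤ 1)
    (h : ENNReal.ofReal (2 * η) < ∫⁻ a in J, fiberVol k x μ a) :
    ENNReal.ofReal η ≤ volume {q : ℝ × ℝ | q.1 ∈ J ∧ q.2 ∈ Icc (0 : ℝ) 1 ∧
      (μ ≤ taylorCoeff k x 0 q.1 q.2 ∧ taylorCoeff k x 0 q.1 q.2 ≤ μ + 1) ∧
      ∀ j, 1 ≤ j → j ≤ k → |taylorCoeff k x j q.1 q.2| ≤ (2 * k ^ 2 / η) ^ j} := by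
  set H : ℝ := 2 * k ^ 2 / η with hH
  set T : Set (ℝ × ℝ) := {q : ℝ × ℝ | q.2 ∈ Icc (0 : ℝ) 1 ∧
      (μ ≤ taylorCoeff k x 0 q.1 q.2 ∧ taylorCoeff k x 0 q.1 q.2 ≤ μ + 1) ∧
      ∀ j, 1 ≤ j → j ≤ k → |taylorCoeff k x j q.1 q.2| ≤ H ^ j} with hT
  have hTm : MeasurableSet T := by
    have hc := fun j => (continuous_taylorCoeff_uncurry k x j).measurable
    have hb : MeasurableSet {q : ℝ × ℝ | ∀ j, 1 ≤ j → j ≤ k →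
        |taylorCoeff k x j q.1 q.2| ≤ H ^ j} := by
      simp only [ofPred_forall]
      refine MeasurableSet.iInter fun j => MeasurableSet.iInter fun _ => MeasurableSet.iInter
        fun _ => measurableSet_le ?_ measurable_const
      have := hc j
      fun_prop
    exact (measurableSet_Icc.preimage measurable_snd).inter
      (((measurableSet_le measurable_const (hc 0)).inter
        (measurableSet_le (hc 0) measurable_const)).inter hb)
  have hE : volume {q : ℝ × ℝ | q.1 ∈ J ∧ q.2 ∈ Icc (0 : ℝ) 1 ∧
      (μ ≤ taylorCoeff k x 0 q.1 q.2 ∧ taylorCoeff k x 0 q.1 q.2 ≤ μ + 1) ∧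
      ∀ j, 1 ≤ j → j ≤ k → |taylorCoeff k x j q.1 q.2| ≤ H ^ j} =
      ∫⁻ a in J, volume (Prod.mk a ⁻¹' T) := by
    have : {q : ℝ × ℝ | q.1 ∈ J ∧ q.2 ∈ Icc (0 : ℝ) 1 ∧
      (μ ≤ taylorCoeff k x 0 q.1 q.2 ∧ taylorCoeff k x 0 q.1 q.2 ≤ μ + 1) ∧
      ∀ j, 1 ≤ j → j ≤ k → |taylorCoeff k x j q.1 q.2| ≤ H ^ j} = T ∩ J ×ˢ univ := by
      ext q
      simp only [hT, mem_ofPred_eq, mem_inter_iff, mem_prod, mem_univ, and_true]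
      tauto
    rw [this, ← Measure.restrict_apply hTm, Measure.volume_eq_prod, ← Measure.prod_restrict,
      Measure.restrict_univ, Measure.prod_apply hTm]
  rw [hE]
  have hfib : ∀ a, fiberVol k x μ a ≤ volume (Prod.mk a ⁻¹' T) + ENNReal.ofReal η := fun a => by
    refine le_trans ?_ (add_le_add_right (volume_exists_lt_abs_hasseDeriv_le (fiberPoly k x a) hk
      (natDegree_fiberPoly_le k x a) μ hη) _)
    refine (measure_mono ?_).trans (measure_union_le _ _)
    intro t ht
    by_cases hb : ∀ j, 1 ≤ j → j ≤ k → |taylorCoeff k x j a t| ≤ H ^ j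
    · exact Or.inl ⟨ht.1, ht.2, hb⟩
    · push Not at hb
      refine Or.inr ⟨?_, ?_⟩
      · rw [eval_fiberPoly]
        exact ht.2
      · simp only [eval_hasseDeriv_fiberPoly]
        exact hb
  have hsum : ENNReal.ofReal η + ENNReal.ofReal η ≤
      (∫⁻ a in J, volume (Prod.mk a ⁻¹' T)) + ENNReal.ofReal η := by
    rw [← ENNReal.ofReal_add hη.le hη.le, ← two_mul]
    calc _ ≤ ∫⁻ a in J, (volume (Prod.mk a ⁻¹' T) + ENNReal.ofReal η) :=
          h.le.trans (lintegral_mono hfib)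
      _ = (∫⁻ a in J, volume (Prod.mk a ⁻¹' T)) + ENNReal.ofReal η * volume J := by
          rw [lintegral_add_right _ measurable_const, setLIntegral_const]
      _ ≤ _ := by
          gcongr
          exact mul_le_of_le_one_right' hJ1
  exact (ENNReal.add_le_add_iff_right ENNReal.ofReal_ne_top).1 hsum

theorem Finset.exists_add_two_le (s : Finset ℕ) {n : ℕ} (h : 2 * n ≤ s.card) :
    ∃ f : Fin n → ℕ, (∀ i, f i ∈ s) ∧ ∀ i j, i < j → f i + 2 ≤ f j := by
  refine ⟨fun i => s.orderEmbOfFin rfl ⟨2 * i, by omega⟩,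
    fun i => s.orderEmbOfFin_mem rfl _, fun i j hij => ?_⟩
  have hij' : (i : ℕ) < j := hij
  have h1 : s.orderEmbOfFin rfl ⟨2 * i, by omega⟩ < s.orderEmbOfFin rfl ⟨2 * i + 1, by omega⟩ :=
    (s.orderEmbOfFin rfl).strictMono (by simp [Fin.lt_def])
  have h2 : s.orderEmbOfFin rfl ⟨2 * i + 1, by omega⟩ < s.orderEmbOfFin rfl ⟨2 * j, by omega⟩ :=
    (s.orderEmbOfFin rfl).strictMono (by simp [Fin.lt_def]; omega)
  simp only
  omega

/-- The `n`-th of the `K` closed intervals of equal length covering `[0, 1]`. -/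
def strip (K n : ℕ) : Set ℝ := Icc ((n : ℝ) / K) ((n + 1) / K)

theorem Icc_subset_iUnion_strip {K : ℕ} (hK : 0 < K) :
    Icc (0 : ℝ) 1 ⊆ ⋃ n ∈ Finset.range K, strip K n := by
  intro a ha
  have hK' : (0 : ℝ) < K := Nat.cast_pos.2 hK
  simp only [mem_iUnion, Finset.mem_range, strip, mem_Icc, div_le_iff₀ hK', le_div_iff₀ hK']
  rcases ha.2.lt_or_eq with h1 | h1
  · have h0 : 0 ≤ a * K := mul_nonneg ha.1 hK'.le
    exact ⟨⌊a * K⌋₊, (Nat.floor_lt h0).2 (by nlinarith), Nat.floor_le h0,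
      (Nat.lt_floor_add_one _).le⟩
  · refine ⟨K - 1, by omega, ?_⟩
    rw [Nat.cast_sub hK, h1]
    constructor <;> simp

theorem lintegral_Icc_le_sum_strip {K : ℕ} (hK : 0 < K) (g : ℝ → ℝ≥0∞) :
    ∫⁻ a in Icc (0 : ℝ) 1, g a ≤ ∑ n ∈ Finset.range K, ∫⁻ a in strip K n, g a := by
  refine (lintegral_mono_set (Icc_subset_iUnion_strip hK)).trans ?_
  rw [← Finset.tsum_subtype (Finset.range K) fun n => ∫⁻ a in strip K n, g a,
    ← lintegral_sum_measure]
  exact lintegral_mono' (Measure.restrict_biUnion_le (Finset.range K).countable_toSet) le_rfl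

theorem le_volume_slowConfig_slice {k : ℕ} (hk : 1 ≤ k) {K : ℕ} (hK : 0 < K) {δ : ℝ} (hδ : 0 < δ)
    {x : Idx k → ℝ} {μ : ℝ}
    (h : ENNReal.ofReal δ < ∫⁻ a in Icc (0 : ℝ) 1, fiberVol k x μ a)
    (hstrip : ∀ n < K, ∫⁻ a in strip K n, fiberVol k x μ a ≤ ENNReal.ofReal (δ / (4 * (k + 1)))) :
    ENNReal.ofReal (δ / (4 * K)) ^ (k + 1) ≤
      volume (Prod.mk x ⁻¹' slowConfig k (2 * k ^ 2 / (δ / (4 * K))) K) := by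
  have hK' : (0 : ℝ) < K := Nat.cast_pos.2 hK
  set η := δ / (4 * K) with hη
  have hη0 : 0 < η := by positivity
  set A := (Finset.range K).filter fun n =>
    ENNReal.ofReal (2 * η) < ∫⁻ a in strip K n, fiberVol k x μ a with hA
  have hcard : 2 * (k + 1) ≤ A.card := by
    by_contra! hlt
    refine absurd h (not_lt.2 ?_)
    calc _ ≤ ∑ n ∈ Finset.range K, ∫⁻ a in strip K n, fiberVol k x μ a :=
          lintegral_Icc_le_sum_strip hK _
      _ ≤ ∑ n ∈ Finset.range K, ((if n ∈ A then ENNReal.ofReal (δ / (4 * (k + 1))) else 0) +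
            ENNReal.ofReal (2 * η)) := Finset.sum_le_sum fun n hn => by
          split_ifs with hnA
          · exact (hstrip n (Finset.mem_range.1 hn)).trans le_self_add
          · rw [zero_add]
            by_contra! hgt
            exact hnA (Finset.mem_filter.2 ⟨hn, hgt⟩)
      _ = A.card * ENNReal.ofReal (δ / (4 * (k + 1))) + K * ENNReal.ofReal (2 * η) := by
          rw [Finset.sum_add_distrib, Finset.sum_ite_mem,
            Finset.inter_eq_right.2 (Finset.filter_subset _ _), Finset.sum_const, Finset.sum_const,
            Finset.card_range, nsmul_eq_mul, nsmul_eq_mul]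
      _ = ENNReal.ofReal (A.card * (δ / (4 * (k + 1))) + K * (2 * η)) := by
          rw [ENNReal.ofReal_add (by positivity) (by positivity),
            ENNReal.ofReal_mul (Nat.cast_nonneg _), ENNReal.ofReal_mul (Nat.cast_nonneg _),
            ENNReal.ofReal_natCast, ENNReal.ofReal_natCast]
      _ ≤ _ := by
          refine ENNReal.ofReal_le_ofReal ?_
          have h1 : (A.card : ℝ) ≤ 2 * (k + 1) := by exact_mod_cast hlt.le
          calc _ ≤ 2 * (k + 1) * (δ / (4 * (k + 1))) + K * (2 * η) := by gcongr
            _ = δ := by rw [hη]; field_simp; norm_num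
  obtain ⟨f, hfA, hf⟩ := A.exists_add_two_le hcard
  have hfK : ∀ i, f i < K := fun i => Finset.mem_range.1 (Finset.mem_filter.1 (hfA i)).1
  set E : Fin (k + 1) → Set (ℝ × ℝ) := fun i => {q : ℝ × ℝ | q.1 ∈ strip K (f i) ∧
      q.2 ∈ Icc (0 : ℝ) 1 ∧
      (μ ≤ taylorCoeff k x 0 q.1 q.2 ∧ taylorCoeff k x 0 q.1 q.2 ≤ μ + 1) ∧
      ∀ j, 1 ≤ j → j ≤ k → |taylorCoeff k x j q.1 q.2| ≤ (2 * k ^ 2 / η) ^ j} with hE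
  have hsub : univ.pi E ⊆ Prod.mk x ⁻¹' slowConfig k (2 * k ^ 2 / η) K := by
    intro p hp
    have hpE : ∀ i, p i ∈ E i := fun i => hp i (mem_univ i)
    have hsep : ∀ i j, i < j → 1 / (K : ℝ) ≤ |(p i).1 - (p j).1| := fun i j hij => by
      rw [abs_sub_comm]
      refine le_trans ?_ (le_abs_self _)
      have h1 := (hpE i).1.2
      have h2 := (hpE j).1.1
      have h3 : (f i : ℝ) + 2 ≤ f j := by exact_mod_cast hf i j hij
      calc 1 / (K : ℝ) ≤ f j / K - (f i + 1) / K := by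
            rw [← sub_div]
            gcongr
            linarith
        _ ≤ _ := sub_le_sub h2 h1
    refine ⟨fun i => ⟨⟨le_trans (by positivity) (hpE i).1.1, (hpE i).1.2.trans ?_⟩, (hpE i).2.1⟩,
      fun i j hij => ?_, fun i => (hpE i).2.2.2, fun i => ?_⟩
    · rw [div_le_one hK']
      exact_mod_cast hfK i
    · rcases lt_or_gt_of_ne hij with hij | hij
      · exact hsep i j hij
      · rw [abs_sub_comm]
        exact hsep j i hij
    · have h1 := (hpE i).2.2.1
      have h2 := (hpE 0).2.2.1
      rw [abs_le]
      constructor <;> linarith [h1.1, h1.2, h2.1, h2.2]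
  refine le_trans ?_ (measure_mono hsub)
  rw [volume_pi_pi]
  calc ENNReal.ofReal η ^ (k + 1) = ∏ _i : Fin (k + 1), ENNReal.ofReal η := by simp
    _ ≤ _ := Finset.prod_le_prod' fun i _ =>
      ofReal_le_volume_slow_of_lt hk x μ hη0 (J := strip K (f i)) (by
        rw [strip, Real.volume_Icc, ← sub_div, add_sub_cancel_left, ENNReal.ofReal_le_one,
          div_le_one hK']
        exact_mod_cast hK) (Finset.mem_filter.1 (hfA i)).2

theorem sum_Idx_fst_eq_sum_snd (k : ℕ) :
    ∑ β : Idx k, (β.1.1 : ℕ) = ∑ β : Idx k, (β.1.2 : ℕ) := by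
  let σ : Idx k → Idx k := fun β => ⟨β.1.swap, by
    have := β.2
    simp only [Prod.fst_swap, Prod.snd_swap]
    omega⟩
  have hσ : Function.Involutive σ := fun β => Subtype.ext (Prod.swap_swap β.1)
  exact Fintype.sum_bijective σ hσ.bijective _ _ fun β => rfl

theorem six_mul_sum_mul_sub (k : ℕ) :
    6 * ∑ i ∈ Finset.range (k + 1), i * (k + 1 - i) = k * (k + 1) * (k + 2) := by
  induction k with
  | zero => simp
  | succ k ih =>
    have h1 : ∑ i ∈ Finset.range (k + 1), i * (k + 1 + 1 - i) =
        ∑ i ∈ Finset.range (k + 1), i * (k + 1 - i) + ∑ i ∈ Finset.range (k + 1), i := by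
      rw [← Finset.sum_add_distrib]
      refine Finset.sum_congr rfl fun i hi => ?_
      have := Finset.mem_range.1 hi
      rw [Nat.sub_add_comm (by omega : i ≤ k + 1), mul_add, mul_one]
    have h2 := Finset.sum_range_id_mul_two (k + 1)
    rw [Finset.sum_range_succ, h1, Nat.add_sub_cancel_left]
    rw [Nat.add_sub_cancel] at h2
    nlinarith

theorem six_mul_sum_Idx_fst (k : ℕ) :
    6 * ∑ β : Idx k, (β.1.1 : ℕ) = k * (k + 1) * (k + 2) := by
  rw [← six_mul_sum_mul_sub]
  congr 1
  have h1 : ∑ β : Idx k, (β.1.1 : ℕ) = ∑ β : Fin (k + 1) × Fin (k + 1) with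
      1 ≤ (β.1 : ℕ) + (β.2 : ℕ) ∧ (β.1 : ℕ) + (β.2 : ℕ) ≤ k, (β.1 : ℕ) :=
    Finset.sum_nbij (fun β : Idx k => β.1) (fun β _ => by simp [β.2])
      (fun β _ γ _ h => Subtype.ext h)
      (fun β hβ => ⟨⟨β, (Finset.mem_filter.1 hβ).2⟩, Finset.mem_coe.2 (Finset.mem_univ _), rfl⟩)
      fun _ _ => rfl
  rw [h1]
  rw [Finset.sum_filter, Fintype.sum_prod_type,
    ← Fin.sum_univ_eq_sum_range fun i => i * (k + 1 - i)]
  refine Finset.sum_congr rfl fun i _ => ?_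
  have hi := i.2
  rw [Fin.sum_univ_eq_sum_range fun j => if 1 ≤ (i : ℕ) + j ∧ (i : ℕ) + j ≤ k then (i : ℕ) else 0,
    ← Finset.sum_filter]
  rcases Nat.eq_zero_or_pos (i : ℕ) with h0 | h0
  · simp [h0]
  · have : (Finset.range (k + 1)).filter (fun j => 1 ≤ (i : ℕ) + j ∧ (i : ℕ) + j ≤ k) =
        Finset.range (k + 1 - i) := by
      ext j
      simp only [Finset.mem_filter, Finset.mem_range]
      omega
    rw [this, Finset.sum_const, Finset.card_range, smul_eq_mul, mul_comm]

theorem sum_Idx_layer (k : ℕ) (β : Idx k) (F : ℕ → ℝ)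
    (hF : ∀ g, (β.1.1 : ℕ) < g → F g = 0) :
    ∑ γ : Idx k, (if (β.1.2 : ℕ) = γ.1.2 then F γ.1.1 else 0) +
      (if (β.1.2 : ℕ) = 0 then F 0 else 0) = ∑ g ∈ Finset.range ((β.1.1 : ℕ) + 1), F g := by
  have hβ := β.2
  have h1 : ∑ γ : Idx k, (if (β.1.2 : ℕ) = γ.1.2 then F γ.1.1 else 0) =
      ∑ g ∈ (Finset.range ((β.1.1 : ℕ) + 1)).filter (fun g => 1 ≤ g + (β.1.2 : ℕ)), F g := by
    have : ∀ γ : Idx k, (if (β.1.2 : ℕ) = γ.1.2 then F γ.1.1 else 0) =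
        if (β.1.2 : ℕ) = γ.1.2 ∧ (γ.1.1 : ℕ) ≤ β.1.1 then F γ.1.1 else 0 := fun γ => by
      by_cases h : (γ.1.1 : ℕ) ≤ β.1.1
      · simp [h]
      · simp [h, hF _ (not_le.1 h)]
    rw [Finset.sum_congr rfl fun γ _ => this γ, ← Finset.sum_filter]
    refine Finset.sum_nbij (fun γ : Idx k => (γ.1.1 : ℕ)) ?_ ?_ ?_ fun _ _ => rfl
    · intro γ hγ
      have h := (Finset.mem_filter.1 hγ).2
      have := γ.2
      exact Finset.mem_filter.2 ⟨Finset.mem_range.2 (by omega), by omega⟩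
    · intro γ hγ γ' hγ' h
      have h1 := (Finset.mem_filter.1 hγ).2
      have h2 := (Finset.mem_filter.1 hγ').2
      exact Subtype.ext (Prod.ext (Fin.ext h) (Fin.ext (by omega)))
    · intro g hg
      obtain ⟨hg1, hg2⟩ := Finset.mem_filter.1 hg
      have hg1' := Finset.mem_range.1 hg1
      let γ : Idx k := ⟨(⟨g, by omega⟩, β.1.2), by simp only; omega⟩
      have h1 : (γ.1.1 : ℕ) = g := rfl
      exact ⟨γ, Finset.mem_coe.2 (Finset.mem_filter.2 ⟨Finset.mem_univ _, rfl, by omega⟩), rfl⟩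
  rw [h1]
  by_cases h0 : (β.1.2 : ℕ) = 0
  · have : (Finset.range ((β.1.1 : ℕ) + 1)).filter (fun g => 1 ≤ g + (β.1.2 : ℕ)) =
        (Finset.range ((β.1.1 : ℕ) + 1)).erase 0 := by
      ext g
      simp only [Finset.mem_filter, Finset.mem_range, Finset.mem_erase, h0]
      omega
    rw [this, if_pos h0, Finset.sum_erase_add _ _ (Finset.mem_range.2 (Nat.succ_pos _))]
  · rw [if_neg h0, add_zero, Finset.filter_true_of_mem fun g _ => by omega]

instance (k : ℕ) : DecidableEq (Idx k) := Classical.decEq _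

/-- The matrix by which coefficients transform when the `n`-th of `K` vertical strips of the unit
square is stretched to the whole square. -/
def stripMatrix (k K n : ℕ) : Matrix (Idx k) (Idx k) ℝ := fun γ β =>
  if (β.1.2 : ℕ) = γ.1.2 then
    (1 / (K : ℝ)) ^ (γ.1.1 : ℕ) * ((n : ℝ) / K) ^ ((β.1.1 : ℕ) - γ.1.1) *
      (β.1.1 : ℕ).choose γ.1.1 else 0

theorem taylorCoeff_stripMatrix (k K n : ℕ) (x : Idx k → ℝ) (s t : ℝ) :
    taylorCoeff k x 0 ((n + s) / K) t =
      taylorCoeff k (Matrix.toLin' (stripMatrix k K n) x) 0 s t +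
        ∑ β : Idx k, if (β.1.2 : ℕ) = 0 then x β * ((n : ℝ) / K) ^ (β.1.1 : ℕ) else 0 := by
  simp only [taylorCoeff_zero, Matrix.toLin'_apply, Matrix.mulVec, dotProduct, Finset.sum_mul]
  rw [Finset.sum_comm, ← Finset.sum_add_distrib]
  refine Finset.sum_congr rfl fun β _ => ?_
  have h := sum_Idx_layer k β (fun g => (1 / (K : ℝ) * s) ^ g * ((n : ℝ) / K) ^ ((β.1.1 : ℕ) - g) *
    (β.1.1 : ℕ).choose g) fun g hg => by simp [Nat.choose_eq_zero_of_lt hg]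
  rw [← add_pow] at h
  have h2 : ((n + s) / K : ℝ) = 1 / (K : ℝ) * s + (n : ℝ) / K := by ring
  rw [h2, ← h, mul_add, add_mul, Finset.mul_sum, Finset.sum_mul]
  congr 1
  · refine Finset.sum_congr rfl fun γ _ => ?_
    unfold stripMatrix
    split_ifs with hγ
    · rw [hγ, mul_pow]
      ring
    · ring
  · split_ifs with h0
    · simp [h0]
    · simp

theorem fiberVol_stripMatrix (k K n : ℕ) (x : Idx k → ℝ) (μ : ℝ) : ∃ μ' : ℝ, ∀ s,
    fiberVol k x μ ((n + s) / K) = fiberVol k (Matrix.toLin' (stripMatrix k K n) x) μ' s := by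
  set c := ∑ β : Idx k, if (β.1.2 : ℕ) = 0 then x β * ((n : ℝ) / K) ^ (β.1.1 : ℕ) else 0 with hc
  refine ⟨μ - c, fun s => ?_⟩
  unfold fiberVol
  congr 1
  ext t
  simp only [mem_ofPred_eq, taylorCoeff_stripMatrix, ← hc, sub_le_iff_le_add]
  refine and_congr_right fun _ => and_congr_right fun _ => ?_
  constructor <;> intro h <;> linarith

theorem lintegral_strip {K : ℕ} (hK : 0 < K) (n : ℕ) (g : ℝ → ℝ≥0∞) :
    ∫⁻ a in strip K n, g a =
      ENNReal.ofReal (1 / K) * ∫⁻ s in Icc (0 : ℝ) 1, g ((n + s) / K) := by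
  have hK' : (0 : ℝ) < K := Nat.cast_pos.2 hK
  have himg : strip K n = (fun s : ℝ => (n + s) / K) '' Icc 0 1 := by
    ext a
    simp only [strip, mem_Icc, mem_image, div_le_iff₀ hK', le_div_iff₀ hK']
    constructor
    · exact fun h => ⟨a * K - n, ⟨by linarith, by linarith⟩, by field_simp; ring⟩
    · rintro ⟨s, hs, rfl⟩
      rw [div_mul_cancel₀ _ hK'.ne']
      constructor <;> linarith
  rw [himg, lintegral_image_eq_lintegral_abs_deriv_mul (f' := fun _ => 1 / K) measurableSet_Icc
    (fun s _ => (((hasDerivAt_id' s).const_add (n : ℝ)).div_const (K : ℝ)).hasDerivWithinAt)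
    (fun s _ s' _ h => by
      have := (div_left_inj' hK'.ne').1 h
      linarith), lintegral_const_mul' _ _ ENNReal.ofReal_ne_top,
    abs_of_pos (by positivity)]

theorem lintegral_strip_le {k K n : ℕ} (hK : 0 < K) {δ c : ℝ} {x : Idx k → ℝ}
    (h : Matrix.toLin' (stripMatrix k K n) x ∉ Lset k (δ * K / c)) (μ : ℝ) :
    ∫⁻ a in strip K n, fiberVol k x μ a ≤ ENNReal.ofReal (δ / c) := by
  have hK' : (0 : ℝ) < K := Nat.cast_pos.2 hK
  obtain ⟨μ', hμ'⟩ := fiberVol_stripMatrix k K n x μ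
  rw [mem_Lset_iff, not_exists] at h
  rw [lintegral_strip hK, lintegral_congr fun s => hμ' s]
  calc _ ≤ ENNReal.ofReal (1 / K) * ENNReal.ofReal (δ * K / c) := by
        gcongr
        exact not_lt.1 (h μ')
    _ = _ := by
        rw [← ENNReal.ofReal_mul (by positivity)]
        congr 1
        field_simp

theorem det_stripMatrix (k K n : ℕ) :
    (stripMatrix k K n).det = (1 / (K : ℝ)) ^ ∑ β : Idx k, (β.1.1 : ℕ) := by
  let _ : LinearOrder (Idx k) := LinearOrder.lift' (idxRank k) (idxRank_injective k)
  have hlow : (stripMatrix k K n).IsLowerTriangular := by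
    intro β γ h
    have h' : idxRank k β < idxRank k γ := h
    rw [idxRank_lt_iff] at h'
    unfold stripMatrix
    split_ifs with heq
    · rw [Nat.choose_eq_zero_of_lt (by omega), Nat.cast_zero, mul_zero]
    · rfl
  have h := Matrix.det_of_isLowerTriangular _ hlow
  rw [← Finset.prod_pow_eq_pow_sum]
  refine Eq.trans (by convert h) (Finset.prod_congr rfl fun β _ => ?_)
  simp [stripMatrix]

theorem volume_preimage_stripMatrix {k K : ℕ} (hK : 0 < K) (n : ℕ) (L : Set (Idx k → ℝ)) :
    volume (Matrix.toLin' (stripMatrix k K n) ⁻¹' L) =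
      (K : ℝ≥0∞) ^ (∑ β : Idx k, (β.1.1 : ℕ)) * volume L := by
  have hK' : (0 : ℝ) < K := Nat.cast_pos.2 hK
  have hdet : LinearMap.det (Matrix.toLin' (stripMatrix k K n)) =
      (1 / (K : ℝ)) ^ ∑ β : Idx k, (β.1.1 : ℕ) := by
    rw [LinearMap.det_toLin', det_stripMatrix]
  rw [Measure.addHaar_preimage_linearMap _ (by rw [hdet]; positivity), hdet, one_div, inv_pow,
    inv_inv, abs_of_pos (by positivity), ENNReal.ofReal_pow hK'.le, ENNReal.ofReal_natCast]

theorem volume_le_slowConfig_slice_le {k : ℕ} {H κ η : ℝ} (hH : 0 < H) (hκ : 1 ≤ κ) (hη : 0 < η) :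
    volume {x | ENNReal.ofReal η ^ (k + 1) ≤ volume (Prod.mk x ⁻¹' slowConfig k H κ)} ≤
      ENNReal.ofReal ((4 * (k + 1) * κ ^ k) ^ Fintype.card (Idx k) *
        H ^ (∑ β : Idx k, (β.1.2 : ℕ)) * (2 * log (1 + H) / H) ^ (k - 1) / η ^ (k + 1)) := by
  have hm := (isClosed_slowConfig k H κ).measurableSet
  rw [ENNReal.ofReal_div_of_pos (by positivity), ENNReal.ofReal_pow hη.le]
  refine (meas_ge_le_lintegral_div (measurable_measure_prodMk_left hm).aemeasurable
    (pow_ne_zero _ (ENNReal.ofReal_pos.2 hη).ne')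
    (ENNReal.pow_ne_top ENNReal.ofReal_ne_top)).trans ?_
  gcongr
  rw [← Measure.prod_apply hm]
  exact volume_slowConfig_le k hH hκ

theorem log_one_add_natCast_div_le (c : ℕ) {δ : ℝ} (hδ : 0 < δ) :
    log (1 + c / δ) ≤ c * log (1 + 1 / δ) := by
  have h0 : 0 < 1 / δ := by positivity
  rw [← log_pow]
  refine log_le_log (by positivity) ?_
  rw [div_eq_mul_one_div]
  exact one_add_mul_le_pow (by linarith) c

theorem exists_volume_le_slowConfig_slice_le (k K : ℕ) (hk : 2 ≤ k) (hK : 0 < K) :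
    ∃ C : ℝ, 0 ≤ C ∧ ∀ δ : ℝ, 0 < δ →
      volume {x | ENNReal.ofReal (δ / (4 * K)) ^ (k + 1) ≤
        volume (Prod.mk x ⁻¹' slowConfig k (2 * k ^ 2 / (δ / (4 * K))) K)} ≤
      ENNReal.ofReal (C * log (1 + 1 / δ) ^ (k - 1) *
        (δ ^ (∑ β : Idx k, (β.1.2 : ℕ) + 2))⁻¹) := by
  have hK' : (0 : ℝ) < K := Nat.cast_pos.2 hK
  set N := Fintype.card (Idx k)
  set S := ∑ β : Idx k, (β.1.2 : ℕ)
  set c : ℕ := 8 * K * k ^ 2 with hc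
  have hc0 : (0 : ℝ) < c := Nat.cast_pos.2 (by positivity)
  obtain ⟨n, rfl⟩ : ∃ n, k = n + 2 := ⟨k - 2, by omega⟩
  refine ⟨(4 * ((n + 2 : ℕ) + 1) * (K : ℝ) ^ (n + 2)) ^ N * c ^ S * 2 ^ (n + 1) *
    (4 * K) ^ (n + 3), by positivity, fun δ hδ => ?_⟩
  have hH : 2 * ((n + 2 : ℕ) : ℝ) ^ 2 / (δ / (4 * K)) = c / δ := by
    rw [hc]
    push_cast
    field_simp
    ring
  rw [hH]
  have hlog : 0 ≤ log (1 + c / δ) := log_nonneg (by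
    have : 0 < c / δ := by positivity
    linarith)
  refine (volume_le_slowConfig_slice_le (by positivity) (Nat.one_le_cast.2 hK)
    (by positivity)).trans (ENNReal.ofReal_le_ofReal ?_)
  calc _ ≤ (4 * ((n + 2 : ℕ) + 1) * (K : ℝ) ^ (n + 2)) ^ N * (c / δ) ^ S *
        (2 * (c * log (1 + 1 / δ)) / (c / δ)) ^ (n + 2 - 1) / (δ / (4 * K)) ^ (n + 2 + 1) := by
        gcongr
        exact log_one_add_natCast_div_le c hδ
    _ = _ := by
        have h1 : 2 * (c * log (1 + 1 / δ)) / (c / δ) = 2 * log (1 + 1 / δ) * δ := by field_simp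
        have h2 : n + 2 - 1 = n + 1 := rfl
        rw [h1, h2]
        simp only [div_pow, mul_pow, pow_add]
        field_simp

theorem Lset_subset {k : ℕ} (hk : 1 ≤ k) {K : ℕ} (hK : 0 < K) {δ : ℝ} (hδ : 0 < δ) :
    Lset k δ ⊆ (⋃ n ∈ Finset.range K,
      Matrix.toLin' (stripMatrix k K n) ⁻¹' Lset k (δ * K / (4 * (k + 1)))) ∪
      {x | ENNReal.ofReal (δ / (4 * K)) ^ (k + 1) ≤
        volume (Prod.mk x ⁻¹' slowConfig k (2 * k ^ 2 / (δ / (4 * K))) K)} := by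
  intro x hx
  obtain ⟨μ, hμ⟩ := mem_Lset_iff.1 hx
  refine or_iff_not_imp_left.2 fun h => le_volume_slowConfig_slice hk hK hδ hμ fun n hn => ?_
  refine lintegral_strip_le hK (fun hmem => h ?_) μ
  exact mem_iUnion₂.2 ⟨n, Finset.mem_range.2 hn, hmem⟩

/-- The recursive estimate (3.9): for every `k ≥ 2` there is `C₁ = C₁(k) > 0` such that
for every dyadic `K = 2^m ≥ 2^{10k}` there is `C₂ = C₂(k,K) < ∞` with, for all
`δ ∈ (0,1]`,
`|L_δ| ≤ K^{1 + k(k+1)(k+2)/6} |L_{δK/C₁}| + C₂ (log₊ δ)^{k−1} δ^{−k(k+1)(k+2)/6−2}`. -/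
theorem Lset_recursion (k : ℕ) (hk : 2 ≤ k) :
    ∃ C₁ : ℝ, 0 < C₁ ∧
      ∀ m K : ℕ, K = 2 ^ m → 2 ^ (10 * k) ≤ K →
        ∃ C₂ : ℝ, 0 ≤ C₂ ∧
          ∀ δ : ℝ, 0 < δ → δ ≤ 1 →
            volume (Lset k δ) ≤
              (K : ℝ≥0∞) ^ (1 + k * (k + 1) * (k + 2) / 6) *
                  volume (Lset k (δ * K / C₁)) +
                ENNReal.ofReal (C₂ * Real.log (1 + 1 / δ) ^ (k - 1) *
                  δ ^ (-((k : ℝ) * (k + 1) * (k + 2) / 6 + 2))) := by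
  refine ⟨4 * (k + 1), by positivity, fun m K hKm _ => ?_⟩
  have hK : 0 < K := hKm ▸ pow_pos two_pos m
  obtain ⟨C, hC, hvol⟩ := exists_volume_le_slowConfig_slice_le k K hk hK
  refine ⟨C, hC, fun δ hδ _ => ?_⟩
  have hS := six_mul_sum_Idx_fst k
  have hrpow : δ ^ (-((k : ℝ) * (k + 1) * (k + 2) / 6 + 2)) =
      (δ ^ (∑ β : Idx k, (β.1.2 : ℕ) + 2))⁻¹ := by
    have : (k : ℝ) * (k + 1) * (k + 2) / 6 + 2 = ((∑ β : Idx k, (β.1.2 : ℕ) + 2 : ℕ) : ℝ) := by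
      have h6 : (6 : ℝ) * (∑ β : Idx k, (β.1.1 : ℕ) : ℕ) = k * (k + 1) * (k + 2) := by
        exact_mod_cast hS
      rw [← sum_Idx_fst_eq_sum_snd, Nat.cast_add, ← h6]
      push_cast
      ring
    rw [this, rpow_neg hδ.le, rpow_natCast]
  rw [hrpow, ← hS, Nat.mul_div_cancel_left _ (by norm_num)]
  refine (measure_mono (Lset_subset (one_le_two.trans hk) hK hδ)).trans
    ((measure_union_le _ _).trans (add_le_add ?_ (hvol δ hδ)))
  calc _ ≤ ∑ n ∈ Finset.range K, volume
          (Matrix.toLin' (stripMatrix k K n) ⁻¹' Lset k (δ * K / (4 * (k + 1)))) :=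
        measure_biUnion_finset_le _ _
    _ = _ := by
        rw [Finset.sum_congr rfl fun n _ => volume_preimage_stripMatrix hK n _, Finset.sum_const,
          Finset.card_range, nsmul_eq_mul, pow_add, pow_one, mul_assoc]
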